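/- arXiv:1312.5196 — 9 statements merged into one kernel-verified Lean document; each statement's English description precedes it below -/
import Mathlib

section
/- Let p be an odd prime and let G be a nontrivial powerful finite p-group. Then exp Zu(G) divides exp G; equivalently, lcm(exp Zu(G), exp G) = exp G, i.e. the exponent of the unitary cover of G equals exp G. -/
/-! Let `α` be a unitary cocycle on `G`, and let `exp G = p ^ k`. By `unitary_pow_eq_one` the values
of `α` lie in a finite `p`-group `A` of roots of unity, so `α` defines a central extension `E` of
`G` by `A` which is a finite `p`-group (`CocycleExt`). Unitarity means that the standard lift `u_g`
of `g` has the same order as `g`, so `u_g ^ p ^ k = 1`. As `u_x u_y = α(x, y) u_{xy}`, the claim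
`α(x, y) ^ p ^ k = 1` follows once `t ↦ t ^ p ^ k` is known to be a homomorphism on `E`
(`mul_pow_of_powerful_mod_center`).

Put `N_0 = E'` and `N_{i+1} = N_i ^ p` (`powSeries`). Since `G` is powerful, `E' ≤ E ^ p Z(E)`, and
a commutator computation with nilpotency gives `[N_i, E] ≤ N_{i+1}` for all `i`
(`commutator_powSeries_le`). So the sections `N_i / N_{i+1}` are central of exponent `p`, and as `p`
is odd, induction on `i` yields three facts (via `mul_pow_mod`):

* `(x c) ^ p ^ i ≡ x ^ p ^ i c ^ p ^ i` modulo `N_{i+1}` for `c ∈ E'`;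
* `[x, y] ^ p ^ i ≡ [x ^ p ^ i, y]` modulo `N_{i+1}`;
* `(a b) ^ p ^ i ≡ a ^ p ^ i b ^ p ^ i` modulo `N_i`.

The first makes `N_k / N_{k+1}` the image of `E'` under `p ^ k`-th powering. By the second that
image is trivial, because `x ^ p ^ k` is central. Hence `N_k = N_k ^ p`, which forces `N_k = 1` in a
finite `p`-group, and the third fact for `i = k` is the homomorphism property. -/

def IsCocycle {G : Type*} [Group G] (α : G → G → ℂˣ) : Prop :=
  ∀ x y z : G, α x y * α (x * y) z = α x (y * z) * α y z

/-- The group of 2-cocycles on `G` with values in `ℂˣ` (trivial action). -/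
def Z2 (G : Type*) [Group G] : Subgroup (G → G → ℂˣ) where
  carrier := {α | IsCocycle α}
  one_mem' := by intro x y z; simp
  mul_mem' := by
    intro a b ha hb x y z
    simp only [Pi.mul_apply]
    rw [mul_mul_mul_comm, ha x y z, hb x y z, mul_mul_mul_comm]
  inv_mem' := by
    intro a ha x y z
    simp only [Pi.inv_apply]
    rw [← mul_inv, ha x y z, mul_inv]

/-- The group of 2-coboundaries on `G` with values in `ℂˣ`. -/
def B2 (G : Type*) [Group G] : Subgroup (G → G → ℂˣ) where
  carrier := {α | ∃ ζ : G → ℂˣ, ∀ x y : G, α x y = ζ x * ζ y * (ζ (x * y))⁻¹}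
  one_mem' := ⟨1, by simp⟩
  mul_mem' := by
    rintro a b ⟨ζ, hζ⟩ ⟨ξ, hξ⟩
    refine ⟨ζ * ξ, fun x y => ?_⟩
    simp only [Pi.mul_apply, hζ x y, hξ x y, mul_inv]
    simp only [mul_comm, mul_left_comm, mul_assoc]
  inv_mem' := by
    rintro a ⟨ζ, hζ⟩
    refine ⟨ζ⁻¹, fun x y => ?_⟩
    simp only [Pi.inv_apply, hζ x y, mul_inv, inv_inv]

/-- The Schur multiplier `M(G) = Z²(G)/B²(G)`. -/
abbrev SchurM (G : Type*) [Group G] := ↥(Z2 G) ⧸ (B2 G).subgroupOf (Z2 G)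

/-- A 2-cocycle is unitary if `∏_{j=0}^{o(g)-1} α(g, g^j) = 1` for every `g`. -/
def IsUnitary {G : Type*} [Group G] (α : G → G → ℂˣ) : Prop :=
  ∀ g : G, ∏ j ∈ Finset.range (orderOf g), α g (g ^ j) = 1

/-- The group `Zu(G)` of unitary 2-cocycles on `G`. -/
def Zu (G : Type*) [Group G] : Subgroup (G → G → ℂˣ) where
  carrier := {α | IsCocycle α ∧ IsUnitary α}
  one_mem' := ⟨(Z2 G).one_mem, by intro g; simp⟩
  mul_mem' := by
    rintro a b ⟨ha, hau⟩ ⟨hb, hbu⟩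
    refine ⟨(Z2 G).mul_mem ha hb, fun g => ?_⟩
    simp only [Pi.mul_apply]
    rw [Finset.prod_mul_distrib, hau g, hbu g, mul_one]
  inv_mem' := by
    rintro a ⟨ha, hau⟩
    refine ⟨(Z2 G).inv_mem ha, fun g => ?_⟩
    simp only [Pi.inv_apply]
    rw [Finset.prod_inv_distrib, hau g, inv_one]

/-- The agemo subgroup `℧(G) = ⟨g^p : g ∈ G⟩`. -/
def agemo (p : ℕ) (G : Type*) [Group G] : Subgroup G :=
  Subgroup.closure {x : G | ∃ g : G, g ^ p = x}

/-- A `p`-group is powerful (for `p` odd) if its derived subgroup is contained in `℧(G)`. -/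
def IsPowerful (p : ℕ) (G : Type*) [Group G] : Prop :=
  commutator G ≤ agemo p G

open scoped commutatorElement

/-! ### Powers in groups of class two -/

/-- In class two, `(ab)^p = a^p b^p [b,a]^(p choose 2)`, and the odd number `p` divides
`p choose 2`. -/
theorem mul_pow_of_comm_central {Q : Type*} [Group Q] {p : ℕ} (hodd : Odd p) {a b : Q}
    (hc : ⁅b, a⁆ ∈ Subgroup.center Q) (hcp : ⁅b, a⁆ ^ p = 1) :
    (a * b) ^ p = a ^ p * b ^ p := by
  set c := ⁅b, a⁆ with hcdef
  have hcc : ∀ x : Q, Commute x c := fun x => Subgroup.mem_center_iff.1 hc x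
  have hba : b * a = a * b * c := by
    rw [(hcc _).eq, hcdef, commutatorElement_def]; group
  have hbn : ∀ n : ℕ, b ^ n * a = a * b ^ n * c ^ n := by
    intro n
    induction n with
    | zero => simp
    | succ n ih =>
      calc b ^ (n + 1) * a = b ^ n * (b * a) := by rw [pow_succ, mul_assoc]
        _ = (b ^ n * a) * b * c := by rw [hba]; simp only [mul_assoc]
        _ = a * b ^ n * (c ^ n * b) * c := by rw [ih]; simp only [mul_assoc]
        _ = a * b ^ n * (b * c ^ n) * c := by rw [((hcc b).pow_right n).eq]
        _ = _ := by rw [pow_succ, pow_succ]; simp only [mul_assoc]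
  have main : ∀ n : ℕ, (a * b) ^ n = a ^ n * b ^ n * c ^ (n.choose 2) := by
    intro n
    induction n with
    | zero => simp
    | succ n ih =>
      calc (a * b) ^ (n + 1) = a ^ n * b ^ n * (c ^ (n.choose 2) * (a * b)) := by
            rw [pow_succ, ih]; simp only [mul_assoc]
        _ = a ^ n * (b ^ n * a) * b * c ^ (n.choose 2) := by
            rw [← ((hcc (a * b)).pow_right _).eq]; simp only [mul_assoc]
        _ = a ^ n * a * b ^ n * (c ^ n * b) * c ^ (n.choose 2) := by
            rw [hbn]; simp only [mul_assoc]
        _ = a ^ n * a * b ^ n * (b * c ^ n) * c ^ (n.choose 2) := by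
            rw [((hcc b).pow_right n).eq]
        _ = a ^ (n + 1) * b ^ (n + 1) * (c ^ n * c ^ (n.choose 2)) := by
            rw [pow_succ, pow_succ]; simp only [mul_assoc]
        _ = _ := by
            rw [← pow_add, Nat.choose_succ_succ' n 1, Nat.choose_one_right]
  obtain ⟨q, hq⟩ := hodd
  have h2 : p.choose 2 = p * q := by
    rw [Nat.choose_two_right, hq]
    have : (2 * q + 1) * (2 * q + 1 - 1) = 2 * ((2 * q + 1) * q) := by
      rw [Nat.add_sub_cancel]; ring
    rw [this]; omega
  rw [main, h2, pow_mul, hcp, one_pow, mul_one]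

/-! ### Subgroups generated by powers -/

section

variable {E : Type*} [Group E]

/-- The normal closure of the `p`-th powers of elements of `H`. For normal `H` this is the
subgroup `H ^ p` generated by these powers. -/
def powSub (p : ℕ) (H : Subgroup E) : Subgroup E :=
  Subgroup.normalClosure {x | ∃ h ∈ H, h ^ p = x}

instance (p : ℕ) (H : Subgroup E) : (powSub p H).Normal := Subgroup.normalClosure_normal

theorem pow_mem_powSub {p : ℕ} {H : Subgroup E} {h : E} (hh : h ∈ H) : h ^ p ∈ powSub p H :=
  Subgroup.subset_normalClosure ⟨h, hh, rfl⟩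

theorem powSub_le {p : ℕ} {H K : Subgroup E} [K.Normal] (h : ∀ x ∈ H, x ^ p ∈ K) :
    powSub p H ≤ K :=
  Subgroup.normalClosure_le_normal (by rintro _ ⟨x, hx, rfl⟩; exact h x hx)

theorem mk_mem_center_iff {K : Subgroup E} [K.Normal] {x : E} :
    (x : E ⧸ K) ∈ Subgroup.center (E ⧸ K) ↔ ∀ y, ⁅x, y⁆ ∈ K := by
  rw [Subgroup.mem_center_iff]
  constructor
  · intro h y
    rw [← QuotientGroup.eq_one_iff]
    have := h (y : E ⧸ K)
    have h2 : ((⁅x, y⁆ : E) : E ⧸ K) = ⁅(x : E ⧸ K), (y : E ⧸ K)⁆ :=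
      map_commutatorElement (QuotientGroup.mk' K) x y
    rw [h2, commutatorElement_eq_one_iff_mul_comm, this]
  · intro h y
    induction y using QuotientGroup.induction_on with
    | H y =>
    have := (QuotientGroup.eq_one_iff _).2 (h y)
    have h2 : ((⁅x, y⁆ : E) : E ⧸ K) = ⁅(x : E ⧸ K), (y : E ⧸ K)⁆ :=
      map_commutatorElement (QuotientGroup.mk' K) x y
    rw [h2, commutatorElement_eq_one_iff_mul_comm] at this
    exact this.symm

theorem mk_mul_pow {p : ℕ} (hodd : Odd p) {K : Subgroup E} [K.Normal] {a b : E}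
    (hc : ∀ y, ⁅⁅b, a⁆, y⁆ ∈ K) (hcp : ⁅b, a⁆ ^ p ∈ K) :
    ((a * b : E) : E ⧸ K) ^ p = (a : E ⧸ K) ^ p * (b : E ⧸ K) ^ p := by
  have h2 : ((⁅b, a⁆ : E) : E ⧸ K) = ⁅(b : E ⧸ K), (a : E ⧸ K)⁆ :=
    map_commutatorElement (QuotientGroup.mk' K) b a
  rw [QuotientGroup.mk_mul]
  apply mul_pow_of_comm_central hodd
  · rw [← h2]; exact mk_mem_center_iff.2 hc
  · rw [← h2, ← QuotientGroup.mk_pow, QuotientGroup.eq_one_iff]; exact hcp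

/-- In a nilpotent group, an inclusion modulo `K` may be proved modulo `K [L, E]`. -/
theorem le_of_le_sup_commutator [Group.IsNilpotent E] {L K : Subgroup E} [K.Normal]
    (h : L ≤ K ⊔ ⁅L, (⊤ : Subgroup E)⁆) : L ≤ K := by
  have key : ∀ n, L ≤ K ⊔ (⊤ : Subgroup E).lowerCentralSeries n := by
    intro n
    induction n with
    | zero => simp
    | succ n ih =>
      refine h.trans (sup_le le_sup_left ?_)
      rw [Subgroup.commutator_le]
      intro l hl y _
      obtain ⟨k, hk, g, hg, rfl⟩ := Subgroup.mem_sup_of_normal_left.1 (ih hl)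
      have : ⁅k * g, y⁆ = k * ⁅g, y⁆ * k⁻¹ * ⁅k, y⁆ := by
        simp only [commutatorElement_def]; group
      rw [this]
      refine mul_mem (mul_mem (mul_mem (Subgroup.mem_sup_left hk) (Subgroup.mem_sup_right ?_))
        (inv_mem (Subgroup.mem_sup_left hk))) (Subgroup.mem_sup_left ?_)
      · exact Subgroup.commutator_mem_commutator hg trivial
      · exact Subgroup.commutator_le_left K ⊤ (Subgroup.commutator_mem_commutator hk trivial)
  obtain ⟨n, hn⟩ := Subgroup.nilpotent_iff_lowerCentralSeries.1 ‹Group.IsNilpotent E›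
  simpa [hn] using key n

/-- The step producing powerfully embedded subgroups. Modulo `M^p [M, E, E]`, for `x ∈ X` a
conjugate `x c` of `x` has `c ∈ M`, so `(x c)^p = x^p c^p = x^p`; hence `M` is central modulo that subgroup,
and nilpotency removes the term `[M, E, E]`. -/
theorem commutator_le_powSub [Group.IsNilpotent E] {p : ℕ} (hodd : Odd p) {X M : Subgroup E}
    [M.Normal] (hX : ⁅X, (⊤ : Subgroup E)⁆ ≤ M) (hM : M ≤ powSub p X ⊔ Subgroup.center E) :
    ⁅M, (⊤ : Subgroup E)⁆ ≤ powSub p M := by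
  apply le_of_le_sup_commutator
  set K := powSub p M ⊔ ⁅⁅M, (⊤ : Subgroup E)⁆, (⊤ : Subgroup E)⁆ with hK
  have hle : M ≤ (Subgroup.center (E ⧸ K)).comap (QuotientGroup.mk' K) := by
    refine hM.trans (sup_le (powSub_le ?_) ?_)
    · intro x hx
      refine Subgroup.mem_center_iff.2 fun y => ?_
      induction y using QuotientGroup.induction_on with
      | H y =>
      set c := ⁅x⁻¹, y⁆ with hc
      have hcM : c ∈ M := hX (Subgroup.commutator_mem_commutator (inv_mem hx) trivial)
      have hcx : ⁅c, x⁆ ∈ ⁅M, (⊤ : Subgroup E)⁆ :=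
        Subgroup.commutator_mem_commutator hcM trivial
      have hxc : x * c = y * x * y⁻¹ := by
        rw [hc, commutatorElement_def]; group
      have h1 := mk_mul_pow (K := K) hodd (a := x) (b := c)
        (fun y => Subgroup.mem_sup_right (Subgroup.commutator_mem_commutator hcx trivial))
        (Subgroup.mem_sup_left (pow_mem_powSub (Subgroup.commutator_le_left M ⊤ hcx)))
      have h2 : (c : E ⧸ K) ^ p = 1 := by
        rw [← QuotientGroup.mk_pow, QuotientGroup.eq_one_iff]
        exact Subgroup.mem_sup_left (pow_mem_powSub hcM)
      rw [h2, mul_one, hxc] at h1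
      simp only [QuotientGroup.mk_mul, QuotientGroup.mk_inv, conj_pow] at h1
      simp only [QuotientGroup.mk'_apply, QuotientGroup.mk_pow]
      exact mul_inv_eq_iff_eq_mul.1 h1
    · intro z hz
      refine mk_mem_center_iff.2 fun y => ?_
      rw [commutatorElement_eq_one_iff_mul_comm.2 (Subgroup.mem_center_iff.1 hz y).symm]
      exact one_mem _
  rw [Subgroup.commutator_le]
  exact fun m hm y _ => mk_mem_center_iff.1 (hle hm) y

/-- Along a descending series with central sections of exponent `p`, the map `x ↦ x ^ p ^ i` is
multiplicative on `a * b` modulo `U i`, provided the powers of `a` and `b` commute modulo the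
series. -/
theorem mul_pow_mod {p : ℕ} (hodd : Odd p) (U : ℕ → Subgroup E) [∀ i, (U i).Normal]
    (hp : ∀ i, ∀ u ∈ U i, u ^ p ∈ U (i + 1))
    (hc : ∀ i, ∀ u ∈ U i, ∀ y, ⁅u, y⁆ ∈ U (i + 1)) {a b : E}
    (hab : ∀ i, ⁅b ^ p ^ i, a ^ p ^ i⁆ ∈ U i) (i : ℕ) :
    (((a * b : E) ^ p ^ i : E) : E ⧸ U i) = (a ^ p ^ i * b ^ p ^ i : E) := by
  induction i with
  | zero => simp
  | succ i ih =>
    set A := a ^ p ^ i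
    set B := b ^ p ^ i
    obtain ⟨n, hn, hn'⟩ : ∃ n ∈ U i, (a * b) ^ p ^ i = A * B * n :=
      ⟨(A * B)⁻¹ * (a * b) ^ p ^ i, QuotientGroup.eq.1 ih.symm, by group⟩
    have hnc : ⁅n, A * B⁆ ∈ U (i + 1) := hc i n hn _
    have e1 := mk_mul_pow (K := U (i + 1)) hodd (a := A * B) (b := n)
      (fun y => Subgroup.commutator_le_left (U (i + 1)) ⊤
        (Subgroup.commutator_mem_commutator hnc trivial))
      (pow_mem hnc p)
    have e2 := mk_mul_pow (K := U (i + 1)) hodd (a := A) (b := B)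
      (hc i _ (hab i)) (hp i _ (hab i))
    have e3 : (n : E ⧸ U (i + 1)) ^ p = 1 := by
      rw [← QuotientGroup.mk_pow, QuotientGroup.eq_one_iff]; exact hp i n hn
    rw [pow_succ, pow_mul, pow_mul, pow_mul, hn', QuotientGroup.mk_pow, e1, e2, e3, mul_one]
    simp [A, B]

/-- If `x ↦ x ^ n` is multiplicative on `H` modulo `K`, the `n`-th powers of elements of `H` form
a normal subgroup modulo `K`; so if that subgroup contains all `p`-th powers of elements of `M`,
it contains `powSub p M`. -/
theorem powSub_subset_pow {H K : Subgroup E} [H.Normal] [K.Normal] {p n : ℕ}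
    (hmul : ∀ a ∈ H, ∀ b ∈ H, ((a * b : E) : E ⧸ K) ^ n = (a : E ⧸ K) ^ n * (b : E ⧸ K) ^ n)
    {M : Subgroup E}
    (hM : ∀ x ∈ M, ∃ m ∈ H, (x : E ⧸ K) ^ p = (m : E ⧸ K) ^ n) :
    ∀ x ∈ powSub p M, ∃ m ∈ H, (x : E ⧸ K) = (m : E ⧸ K) ^ n := by
  let T : Subgroup E :=
    { carrier := {x | ∃ m ∈ H, (x : E ⧸ K) = (m : E ⧸ K) ^ n}
      one_mem' := ⟨1, one_mem _, by simp⟩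
      mul_mem' := by
        rintro x y ⟨m, hm, hx⟩ ⟨m', hm', hy⟩
        exact ⟨m * m', mul_mem hm hm', by rw [hmul m hm m' hm', QuotientGroup.mk_mul, hx, hy]⟩
      inv_mem' := by
        rintro x ⟨m, hm, hx⟩
        exact ⟨m⁻¹, inv_mem hm, by rw [QuotientGroup.mk_inv, hx, QuotientGroup.mk_inv, inv_pow]⟩ }
  have hT : T.Normal := ⟨by
    rintro x ⟨m, hm, hx⟩ g
    refine ⟨g * m * g⁻¹, Subgroup.Normal.conj_mem inferInstance m hm g, ?_⟩
    simp only [QuotientGroup.mk_mul, QuotientGroup.mk_inv, conj_pow, hx]⟩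
  have : powSub p M ≤ T := powSub_le fun x hx => by
    obtain ⟨m, hm, h⟩ := hM x hx
    exact ⟨m, hm, by rw [QuotientGroup.mk_pow, h]⟩
  exact fun x hx => this hx

/-- Modulo `[M, E]` the subgroup `M` is abelian, so there `M = M ^ p` makes every element of `M` a
`p ^ j`-th power for all `j`, hence trivial. Thus `M ≤ [M, E]`, and nilpotency applies. -/
theorem eq_bot_of_le_powSub [Finite E] {p : ℕ} [Fact p.Prime] (hE : IsPGroup p E)
    {M : Subgroup E} [M.Normal] (h : M ≤ powSub p M) : M = ⊥ := by
  have := hE.isNilpotent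
  rw [eq_bot_iff]
  apply le_of_le_sup_commutator
  rw [bot_sup_eq]
  set L := ⁅M, (⊤ : Subgroup E)⁆ with hL
  have hpow : ∀ x ∈ M, ∃ m ∈ M, (x : E ⧸ L) = (m : E ⧸ L) ^ p := by
    intro x hx
    refine powSub_subset_pow (H := M) (M := M) (K := L) (n := p) ?_
      (fun x hx => ⟨x, hx, rfl⟩) x (h hx)
    intro a ha b _
    rw [QuotientGroup.mk_mul]
    apply Commute.mul_pow
    have := mk_mem_center_iff (K := L).2
      (fun y => Subgroup.commutator_mem_commutator ha (Subgroup.mem_top y))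
    exact (Subgroup.mem_center_iff.1 this _).symm
  have hpow' : ∀ j : ℕ, ∀ x ∈ M, ∃ m ∈ M, (x : E ⧸ L) = (m : E ⧸ L) ^ p ^ j := by
    intro j
    induction j with
    | zero => exact fun x hx => ⟨x, hx, by simp⟩
    | succ j ih =>
      intro x hx
      obtain ⟨m, hm, h1⟩ := ih x hx
      obtain ⟨m', hm', h2⟩ := hpow m hm
      exact ⟨m', hm', by rw [h1, h2, ← pow_mul, pow_succ']⟩
  obtain ⟨r, hr⟩ := IsPGroup.iff_card.1 hE
  intro x hx
  obtain ⟨m, _, hm⟩ := hpow' r x hx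
  rw [← QuotientGroup.mk_pow, ← hr, pow_card_eq_one'] at hm
  exact (QuotientGroup.eq_one_iff x).1 hm

/-! ### The power series of the derived subgroup -/

/-- The series `E' ≥ (E')^p ≥ ((E')^p)^p ≥ …`. -/
def powSeries (p : ℕ) (E : Type*) [Group E] : ℕ → Subgroup E
  | 0 => commutator E
  | i + 1 => powSub p (powSeries p E i)

instance powSeries_normal (p : ℕ) : ∀ i, (powSeries p E i).Normal
  | 0 => inferInstanceAs (commutator E).Normal
  | i + 1 => inferInstanceAs (powSub p (powSeries p E i)).Normal

theorem pow_mem_powSeries {p i : ℕ} {u : E} (hu : u ∈ powSeries p E i) :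
    u ^ p ∈ powSeries p E (i + 1) := pow_mem_powSub hu

theorem commutator_powSeries_le [Group.IsNilpotent E] {p : ℕ} (hodd : Odd p)
    (hE : commutator E ≤ powSub p ⊤ ⊔ Subgroup.center E) (i : ℕ) :
    ⁅powSeries p E i, (⊤ : Subgroup E)⁆ ≤ powSeries p E (i + 1) := by
  induction i with
  | zero => exact commutator_le_powSub (X := ⊤) (M := commutator E) hodd le_rfl hE
  | succ i ih => exact commutator_le_powSub hodd ih le_sup_left

/-- If `E` is powerful modulo its centre and `E / Z(E)` has exponent dividing `p ^ k`, then
`x ↦ x ^ p ^ k` is an endomorphism of `E`. -/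
theorem mul_pow_of_powerful_mod_center [Finite E] {p : ℕ} [Fact p.Prime] (hodd : Odd p)
    (hpE : IsPGroup p E) (hE : commutator E ≤ powSub p ⊤ ⊔ Subgroup.center E) {k : ℕ}
    (hk : ∀ x : E, x ^ p ^ k ∈ Subgroup.center E) (a b : E) :
    (a * b) ^ p ^ k = a ^ p ^ k * b ^ p ^ k := by
  have := hpE.isNilpotent
  let N := powSeries p E
  have hc : ∀ i, ∀ u ∈ N i, ∀ y, ⁅u, y⁆ ∈ N (i + 1) := fun i u hu y =>
    commutator_powSeries_le hodd hE i (Subgroup.commutator_mem_commutator hu trivial)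
  have hp : ∀ i, ∀ u ∈ N i, u ^ p ∈ N (i + 1) := fun i u hu => pow_mem_powSeries hu
  have hpi : ∀ c ∈ N 0, ∀ i, c ^ p ^ i ∈ N i := by
    intro c hc0 i
    induction i with
    | zero => simpa using hc0
    | succ i ih => rw [pow_succ, pow_mul]; exact hp i _ ih
  have hNn : ∀ i, (N i).Normal := powSeries_normal p
  -- With a factor in `E'` the power map is multiplicative one step further down the series.
  have s1 : ∀ x : E, ∀ c ∈ N 0, ∀ i,
      (((x * c : E) ^ p ^ i : E) : E ⧸ N (i + 1)) = (x ^ p ^ i * c ^ p ^ i : E) := by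
    intro x c hc0 i
    exact mul_pow_mod hodd (fun i => N (i + 1)) (fun i => hp (i + 1)) (fun i => hc (i + 1))
      (fun i => hc i _ (hpi c hc0 i) _) i
  have hcomm : ∀ x y : E, ⁅x, y⁆ ∈ N 0 := fun x y =>
    Subgroup.commutator_mem_commutator (Subgroup.mem_top x) (Subgroup.mem_top y)
  -- This is `s1` applied to the conjugate `y * x * y⁻¹ = x * ⁅x⁻¹, y⁆`.
  have s2 : ∀ x y : E, ∀ i,
      ((⁅x⁻¹, y⁆ ^ p ^ i : E) : E ⧸ N (i + 1)) = (⁅(x ^ p ^ i)⁻¹, y⁆ : E) := by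
    intro x y i
    have h := s1 x ⁅x⁻¹, y⁆ (hcomm _ _) i
    have hx : x * ⁅x⁻¹, y⁆ = y * x * y⁻¹ := by rw [commutatorElement_def]; group
    rw [hx, conj_pow, QuotientGroup.mk_mul _ (x ^ p ^ i), ← inv_mul_eq_iff_eq_mul] at h
    rw [← h, ← QuotientGroup.mk_inv, ← QuotientGroup.mk_mul, commutatorElement_def]
    congr 1
    group
  have hM : N k = ⊥ := by
    have hhom : ∀ i, ∀ a ∈ N 0, ∀ b ∈ N 0, ((a * b : E) : E ⧸ N (i + 1)) ^ p ^ i =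
        (a : E ⧸ N (i + 1)) ^ p ^ i * (b : E ⧸ N (i + 1)) ^ p ^ i := by
      intro i a _ b hb
      simpa using s1 a b hb i
    -- `N i` consists of `p ^ i`-th powers of elements of `E'` modulo `N (i + 1)`
    have hC : ∀ i, ∀ x ∈ N i, ∃ m ∈ N 0, (x : E ⧸ N (i + 1)) = (m : E ⧸ N (i + 1)) ^ p ^ i := by
      intro i
      induction i with
      | zero => exact fun x hx => ⟨x, hx, by simp⟩
      | succ i ih =>
        refine powSub_subset_pow (hhom (i + 1)) ?_
        intro x hx
        obtain ⟨m, hm, hxm⟩ := ih x hx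
        obtain ⟨r, hr, rfl⟩ : ∃ r ∈ N (i + 1), x = m ^ p ^ i * r := by
          rw [← QuotientGroup.mk_pow] at hxm
          exact ⟨(m ^ p ^ i)⁻¹ * x, QuotientGroup.eq.1 hxm.symm, by group⟩
        refine ⟨m, hm, ?_⟩
        rw [QuotientGroup.mk_mul, Commute.mul_pow, ← QuotientGroup.mk_pow _ r,
          (QuotientGroup.eq_one_iff _).2 (hp _ r hr), mul_one, QuotientGroup.mk_pow, ← pow_mul,
          pow_succ]
        exact Subgroup.mem_center_iff.1 (mk_mem_center_iff.2 (hc _ r hr)) _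
    -- On generators, `s2` turns `⁅x, y⁆ ^ p ^ k` into a commutator with the central `x ^ p ^ k`.
    have h0 : ∀ m ∈ N 0, (m : E ⧸ N (k + 1)) ^ p ^ k = 1 := by
      intro m hm
      change m ∈ commutator E at hm
      rw [commutator_eq_closure] at hm
      induction hm using Subgroup.closure_induction with
      | mem m hm =>
        obtain ⟨x, y, rfl⟩ := hm
        have := s2 x⁻¹ y k
        rw [inv_inv, QuotientGroup.mk_pow] at this
        rw [this, commutatorElement_eq_one_iff_mul_comm.2
          (Subgroup.mem_center_iff.1 (inv_mem (hk _)) y).symm, QuotientGroup.mk_one]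
      | one => simp
      | mul a b ha hb iha ihb =>
        rw [← commutator_eq_closure] at ha hb
        rw [hhom k a ha b hb, iha, ihb, mul_one]
      | inv a _ iha => rw [QuotientGroup.mk_inv, inv_pow, iha, inv_one]
    apply eq_bot_of_le_powSub hpE
    intro x hx
    obtain ⟨m, hm, hxm⟩ := hC k x hx
    rw [h0 m hm, QuotientGroup.eq_one_iff] at hxm
    exact hxm
  have hfin := mul_pow_mod hodd N hp hc (a := a) (b := b) (fun i => by
    have h := QuotientGroup.eq.1 (s2 b⁻¹ (a ^ p ^ i) i)
    rw [inv_inv, inv_pow, inv_inv] at h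
    have hle : N (i + 1) ≤ N i := powSub_le fun x hx => pow_mem hx p
    exact (Subgroup.mul_mem_cancel_left _ (inv_mem (hpi _ (hcomm _ _) i))).1 (hle h)) k
  have := QuotientGroup.eq.1 hfin
  rw [hM, Subgroup.mem_bot, inv_mul_eq_one] at this
  exact this

end

/-! ### The central extension attached to a cocycle -/

section Extension

variable {G A : Type*} [Group G] [CommGroup A]

/-- The central extension of `G` by `A` attached to a normalised 2-cocycle `β`: the set `A × G`
with multiplication `(a, g) (b, h) = (a b β(g, h), g h)`. -/
structure CocycleExt (β : {β : G → G → A //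
    (∀ x y z, β x y * β (x * y) z = β x (y * z) * β y z) ∧ β 1 1 = 1}) where
  coeff : A
  base : G

namespace CocycleExt

variable {β : {β : G → G → A //
    (∀ x y z, β x y * β (x * y) z = β x (y * z) * β y z) ∧ β 1 1 = 1}}

attribute [ext] CocycleExt

theorem one_left (z : G) : β.1 1 z = 1 := by
  have h := β.2.1 1 1 z
  simpa [β.2.2] using h

theorem one_right (z : G) : β.1 z 1 = 1 := by
  have h := β.2.1 z 1 1
  simpa [β.2.2] using h

instance : Mul (CocycleExt β) :=
  ⟨fun x y => ⟨x.coeff * y.coeff * β.1 x.base y.base, x.base * y.base⟩⟩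
instance : One (CocycleExt β) := ⟨⟨1, 1⟩⟩
instance : Inv (CocycleExt β) :=
  ⟨fun x => ⟨x.coeff⁻¹ * (β.1 x.base⁻¹ x.base)⁻¹, x.base⁻¹⟩⟩

theorem mul_coeff (x y : CocycleExt β) :
    (x * y).coeff = x.coeff * y.coeff * β.1 x.base y.base := rfl
theorem mul_base (x y : CocycleExt β) : (x * y).base = x.base * y.base := rfl
theorem one_coeff : (1 : CocycleExt β).coeff = 1 := rfl
theorem one_base : (1 : CocycleExt β).base = 1 := rfl

instance : Group (CocycleExt β) := Group.ofLeftAxioms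
  (by
    intro x y z
    ext
    · simp only [mul_coeff, mul_base]
      have h := β.2.1 x.base y.base z.base
      calc _ = x.coeff * y.coeff * z.coeff *
            (β.1 x.base y.base * β.1 (x.base * y.base) z.base) := by
              simp only [mul_comm, mul_left_comm, mul_assoc]
        _ = _ := by rw [h]; simp only [mul_comm, mul_left_comm, mul_assoc]
    · simp only [mul_base, mul_assoc])
  (by
    intro x
    ext
    · simp [mul_coeff, one_coeff, one_base, one_left]
    · simp [mul_base, one_base])
  (by
    intro x
    ext
    · change x.coeff⁻¹ * (β.1 x.base⁻¹ x.base)⁻¹ * x.coeff * β.1 x.base⁻¹ x.base = 1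
      rw [mul_right_comm x.coeff⁻¹]; simp
    · change x.base⁻¹ * x.base = 1
      simp)

variable (β) in
/-- The projection of the extension onto `G`. -/
def proj : CocycleExt β →* G where
  toFun := base
  map_one' := rfl
  map_mul' _ _ := rfl

variable (β) in
/-- The inclusion of `A` as a central subgroup. -/
def incl : A →* CocycleExt β where
  toFun a := ⟨a, 1⟩
  map_one' := rfl
  map_mul' a b := by ext <;> simp [mul_coeff, mul_base, β.2.2]

theorem incl_mem_center (a : A) : incl β a ∈ Subgroup.center (CocycleExt β) := by
  rw [Subgroup.mem_center_iff]
  intro x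
  ext
  · simp [incl, mul_coeff, one_left, one_right, mul_comm]
  · simp [incl, mul_base]

theorem mem_center_of_proj_eq_one {x : CocycleExt β} (h : proj β x = 1) :
    x ∈ Subgroup.center (CocycleExt β) := by
  have : x = incl β x.coeff := by ext; exacts [rfl, h]
  rw [this]; exact incl_mem_center _

variable (β) in
/-- The standard section `G → CocycleExt β`. -/
def sec (g : G) : CocycleExt β := ⟨1, g⟩

theorem sec_mul_sec (x y : G) : sec β x * sec β y = incl β (β.1 x y) * sec β (x * y) := by
  ext
  · simp [sec, incl, mul_coeff, one_left]
  · simp [sec, incl, mul_base]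

/-- Unitarity of `β` at `g` says exactly that the lift `sec β g` has the same order as `g`; this
is the formula behind it. -/
theorem sec_pow (g : G) (n : ℕ) :
    sec β g ^ n = ⟨∏ j ∈ Finset.range n, β.1 g (g ^ j), g ^ n⟩ := by
  induction n with
  | zero => simp; rfl
  | succ n ih =>
    rw [pow_succ', ih]
    ext
    · simp [sec, mul_coeff, Finset.prod_range_succ]
    · simp [sec, mul_base, pow_succ']

instance [Finite A] [Finite G] : Finite (CocycleExt β) :=
  Finite.of_injective (fun x : CocycleExt β => (x.coeff, x.base)) (by
    intro x y h
    simp only [Prod.mk.injEq] at h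
    ext; exacts [h.1, h.2])

theorem isPGroup {p : ℕ} (hA : IsPGroup p A) (hG : IsPGroup p G) :
    IsPGroup p (CocycleExt β) := by
  intro x
  obtain ⟨i, hi⟩ := hG x.base
  have h1 : x ^ p ^ i = incl β (x ^ p ^ i).coeff := by
    ext
    · rfl
    · have : proj β (x ^ p ^ i) = 1 := by rw [map_pow]; exact hi
      exact this
  obtain ⟨j, hj⟩ := hA (x ^ p ^ i).coeff
  exact ⟨i + j, by rw [pow_add, pow_mul, h1, ← map_pow, hj, map_one]⟩

/-- Powerfulness of `G` lifts to the extension up to central elements. -/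
theorem commutator_le {p : ℕ} (hG : IsPowerful p G) :
    commutator (CocycleExt β) ≤ powSub p ⊤ ⊔ Subgroup.center (CocycleExt β) := by
  have hag : agemo p G ≤ (powSub p ⊤).map (proj β) := by
    rw [agemo, Subgroup.closure_le]
    rintro _ ⟨g, rfl⟩
    exact ⟨sec β g ^ p, pow_mem_powSub trivial, by rw [map_pow]; rfl⟩
  rw [commutator, Subgroup.commutator_le]
  intro x _ y _
  have hxy : proj β ⁅x, y⁆ ∈ agemo p G := hG (by
    rw [map_commutatorElement]
    exact Subgroup.commutator_mem_commutator trivial trivial)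
  obtain ⟨w, hw, hwx⟩ := hag hxy
  have : ⁅x, y⁆ = w * (w⁻¹ * ⁅x, y⁆) := by group
  rw [this]
  refine mul_mem (Subgroup.mem_sup_left hw) (Subgroup.mem_sup_right (mem_center_of_proj_eq_one ?_))
  rw [map_mul, map_inv, hwx, inv_mul_cancel]

end CocycleExt

open CocycleExt in
/-- The theorem for cocycles with values in a finite `p`-group `A`: as `p ^ k`-th powering is a
homomorphism on the extension and kills every `sec β g`, it kills the central element `β(x, y)`,
which measures the failure of `sec β` to be multiplicative. -/
theorem pow_exponent_eq_one [Finite G] [Finite A] {p : ℕ} [Fact p.Prime] (hodd : Odd p)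
    (hG : IsPGroup p G) (hA : IsPGroup p A) (hpow : IsPowerful p G) {k : ℕ}
    (hk : ∀ g : G, g ^ p ^ k = 1) (β : {β : G → G → A //
      (∀ x y z, β x y * β (x * y) z = β x (y * z) * β y z) ∧ β 1 1 = 1})
    (hβ : ∀ g, ∏ j ∈ Finset.range (orderOf g), β.1 g (g ^ j) = 1) (x y : G) :
    β.1 x y ^ p ^ k = 1 := by
  have hsec : ∀ g, sec β g ^ p ^ k = 1 := by
    intro g
    have h1 : sec β g ^ orderOf g = 1 := by
      rw [sec_pow, hβ, pow_orderOf_eq_one]; rfl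
    obtain ⟨t, ht⟩ := orderOf_dvd_of_pow_eq_one (hk g)
    rw [ht, pow_mul, h1, one_pow]
  have h := mul_pow_of_powerful_mod_center (E := CocycleExt β) hodd (isPGroup hA hG)
    (commutator_le hpow) (k := k)
    (fun x => mem_center_of_proj_eq_one (by rw [map_pow, hk])) (sec β x) (sec β y)
  rw [hsec, hsec, mul_one, sec_mul_sec, Commute.mul_pow, hsec, mul_one, ← map_pow] at h
  · exact congrArg coeff h
  · exact (Subgroup.mem_center_iff.1 (incl_mem_center _) _).symm

end Extension

/-! ### Reduction to values in a finite `p`-group -/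

/-- Unitary cocycles take values in roots of unity: with `f x = ∏ z, α x z` the power `α ^ |G|` is
the coboundary of `f`, and unitarity of that coboundary at `g` reads `f g ^ orderOf g = 1`. -/
theorem unitary_pow_eq_one {G : Type*} [Group G] [Finite G] {α : G → G → ℂˣ}
    (hc : IsCocycle α) (hu : IsUnitary α) {e : ℕ} (he : ∀ g : G, g ^ e = 1) (x y : G) :
    α x y ^ (Nat.card G * e) = 1 := by
  have := Fintype.ofFinite G
  let f : G → ℂˣ := fun x => ∏ z, α x z
  have hf : ∀ x y, α x y ^ Nat.card G = f x * f y / f (x * y) := by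
    intro x y
    have h : ∏ z, α x y * α (x * y) z = ∏ z, α x (y * z) * α y z :=
      Finset.prod_congr rfl fun z _ => hc x y z
    rw [Finset.prod_mul_distrib, Finset.prod_mul_distrib, Finset.prod_const, Finset.card_univ,
      Fintype.prod_equiv (Equiv.mulLeft y) (fun z => α x (y * z)) (fun z => α x z)
        (fun z => rfl)] at h
    rw [Nat.card_eq_fintype_card, eq_div_iff_mul_eq']
    exact h
  have hfe : ∀ g, f g ^ e = 1 := by
    intro g
    have h : ∏ j ∈ Finset.range (orderOf g), α g (g ^ j) ^ Nat.card G = 1 := by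
      rw [Finset.prod_pow, hu g, one_pow]
    simp only [hf, ← pow_succ', mul_div_assoc] at h
    rw [Finset.prod_mul_distrib, Finset.prod_range_div' (fun j => f (g ^ j)), pow_orderOf_eq_one,
      pow_zero, div_self', mul_one, Finset.prod_const, Finset.card_range] at h
    obtain ⟨t, ht⟩ := orderOf_dvd_of_pow_eq_one (he g)
    rw [ht, pow_mul, h, one_pow]
  rw [pow_mul, hf, div_pow, mul_pow, hfe, hfe, hfe, mul_one, div_one]

/-- Let `p` be an odd prime and `G` a nontrivial powerful finite
`p`-group.  Then `exp Zu(G)` divides `exp G`, equivalently the exponent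
`lcm(exp Zu(G), exp G)` of the unitary cover equals `exp G`. -/
theorem exponent_unitaryCover_of_powerful
    (p : ℕ) (hp : p.Prime) (hodd : Odd p)
    (G : Type*) [Group G] [Finite G] [Nontrivial G] (hG : IsPGroup p G)
    (hpow : IsPowerful p G) :
    Monoid.exponent ↥(Zu G) ∣ Monoid.exponent G ∧
      Nat.lcm (Monoid.exponent ↥(Zu G)) (Monoid.exponent G) = Monoid.exponent G := by
  suffices h : Monoid.exponent ↥(Zu G) ∣ Monoid.exponent G from ⟨h, Nat.lcm_eq_right h⟩
  have : Fact p.Prime := ⟨hp⟩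
  obtain ⟨n, hn⟩ := IsPGroup.iff_card.1 hG
  obtain ⟨k, -, hk⟩ := (Nat.dvd_prime_pow hp).1 (hn ▸ Group.exponent_dvd_nat_card (G := G))
  have hkG : ∀ g : G, g ^ p ^ k = 1 := fun g => hk ▸ Monoid.pow_exponent_eq_one g
  apply Monoid.exponent_dvd_of_forall_pow_eq_one
  rintro ⟨α, hc, hu⟩
  have hroot : ∀ x y, α x y ∈ rootsOfUnity (p ^ (n + k)) ℂ := by
    intro x y
    rw [mem_rootsOfUnity, pow_add, ← hn]
    exact unitary_pow_eq_one hc hu hkG x y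
  have : NeZero (p ^ (n + k)) := ⟨pow_ne_zero _ hp.ne_zero⟩
  let β : G → G → rootsOfUnity (p ^ (n + k)) ℂ := fun x y => ⟨α x y, hroot x y⟩
  have h11 : α 1 1 = 1 := by simpa using hu 1
  have hA : IsPGroup p (rootsOfUnity (p ^ (n + k)) ℂ) := fun z => ⟨n + k, Subtype.ext z.2⟩
  have key := pow_exponent_eq_one hodd hG hA hpow hkG
    ⟨β, fun x y z => Subtype.ext (hc x y z), Subtype.ext h11⟩
    (fun g => Subtype.ext (by
      have := hu g
      simpa [β, Subgroup.val_finsetProd] using this))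
  apply Subtype.ext
  funext x y
  rw [hk]
  exact congrArg Subtype.val (key x y)
end

section
/- Let G be a nontrivial finite abelian 2-group of exponent n. Then lcm(exp Zu(G), exp G) = 2^σ · n, where σ = 1 if G has a subgroup isomorphic to C_n × C_n (the direct product of two cyclic groups of order n), and σ = 0 otherwise. -/
/-! ### The commutator pairing of a cocycle -/

section Commutator

variable {G : Type*} [CommGroup G] {α : G → G → ℂˣ}

/-- The commutator of the lifts of `y` and `x` in the central extension defined by the cocycle `α`
of an abelian group, as a homomorphism in `x`. -/
def commPairing (hα : IsCocycle α) (y : G) : G →* ℂˣ :=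
  MonoidHom.mk' (fun x => α y x / α x y) (by
    intro a b
    have h1 := congrArg Units.val (hα y a b)
    have h2 := congrArg Units.val (hα a b y)
    have h3 := congrArg Units.val (hα a y b)
    rw [mul_comm y a] at h1
    rw [mul_comm b y] at h2
    rw [div_mul_div_comm, div_eq_div_iff_mul_eq_mul]
    apply mul_left_cancel (a := α a b)
    ext
    push_cast at h1 h2 h3 ⊢
    linear_combination (-(α a y : ℂ) * α b y) * h1 - (α y a : ℂ) * α y b * h2 +
      (α y a : ℂ) * α b y * h3)

lemma commPairing_apply (hα : IsCocycle α) (y x : G) :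
    commPairing hα y x = α y x / α x y := rfl

lemma commPairing_inv (hα : IsCocycle α) (y x : G) :
    (commPairing hα y x)⁻¹ = commPairing hα x y := by
  simp [commPairing_apply]

/-- Swapping the two middle factors in a product of four lifts. -/
lemma cocycle_swap (hα : IsCocycle α) (a b c d : G) :
    α a b * α c d * α (a * b) (c * d) =
      commPairing hα b c * (α a c * α b d * α (a * c) (b * d)) := by
  have h1 := congrArg Units.val (hα (a * b) c d)
  have h2 := congrArg Units.val (hα a b c)
  have h3 := congrArg Units.val (hα a c b)
  have h4 := congrArg Units.val (hα (a * c) b d)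
  rw [mul_right_comm a c b] at h4
  rw [mul_comm c b] at h3
  rw [commPairing_apply, div_mul_eq_mul_div, eq_div_iff_mul_eq']
  ext
  push_cast at h1 h2 h3 h4 ⊢
  linear_combination (-(α a b : ℂ) * α c b) * h1 + (α c b : ℂ) * α (a * b * c) d * h2 -
    (α b c : ℂ) * α (a * b * c) d * h3 + (α b c : ℂ) * α a c * h4

/-- The scalar in the `k`-th power of the lift of `g`. -/
def powScalar (α : G → G → ℂˣ) (g : G) (k : ℕ) : ℂˣ := ∏ j ∈ Finset.range k, α g (g ^ j)

/-- Collecting the `k`-th power of a product of two lifts, as in a group of class two. -/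
lemma collect (hα : IsCocycle α) (h1 : α 1 1 = 1) (x y : G) (k : ℕ) :
    α x y ^ k * powScalar α (x * y) k =
      powScalar α x k * powScalar α y k * α (x ^ k) (y ^ k) *
        commPairing hα y x ^ (k.choose 2) := by
  induction k with
  | zero => simp [powScalar, h1]
  | succ k ih =>
    have hs := cocycle_swap hα x y (x ^ k) (y ^ k)
    rw [map_pow, ← mul_pow, ← pow_succ', ← pow_succ'] at hs
    have hc : (k + 1).choose 2 = k.choose 2 + k := by
      rw [Nat.choose_succ_succ' k 1, Nat.choose_one_right, add_comm]
    have e (g : G) : powScalar α g (k + 1) = powScalar α g k * α g (g ^ k) :=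
      Finset.prod_range_succ _ _
    rw [e, e, e, hc, pow_add]
    have ih' := congrArg Units.val ih
    have hs' := congrArg Units.val hs
    ext
    push_cast at ih' hs' ⊢
    rw [pow_succ]
    linear_combination (α x y : ℂ) * α (x * y) ((x * y) ^ k) * ih' +
      (powScalar α x k : ℂ) * powScalar α y k * (commPairing hα y x : ℂ) ^ (k.choose 2) * hs'

lemma powScalar_eq_one (hu : IsUnitary α) (g : G) {n : ℕ} (hn : orderOf g ∣ n) :
    powScalar α g n = 1 := by
  obtain ⟨m, rfl⟩ := hn
  induction m with
  | zero => simp [powScalar]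
  | succ m ih =>
    rw [powScalar, Nat.mul_succ, Finset.prod_range_add]
    have h := hu g
    simp only [pow_add, pow_mul, pow_orderOf_eq_one, one_pow, one_mul]
    rw [h, mul_one]
    exact ih

lemma unitary_one (hu : IsUnitary α) : α 1 1 = 1 := by
  simpa using hu 1

lemma pow_choose_two {A : Type*} [CommGroup A] {w : A} {m : ℕ} (hw : w ^ 2 ^ (m + 1) = 1) :
    w ^ ((2 ^ (m + 1)).choose 2) = w ^ 2 ^ m := by
  have hc : (2 ^ (m + 1)).choose 2 + 2 ^ m = 2 ^ (m + 1) * 2 ^ m := by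
    have h1 : 1 ≤ 2 ^ (m + 1) := Nat.one_le_two_pow
    rw [Nat.choose_two_right]
    have : 2 ^ (m + 1) * (2 ^ (m + 1) - 1) = 2 * (2 ^ m * (2 ^ (m + 1) - 1)) := by ring
    rw [this, Nat.mul_div_cancel_left _ two_pos]
    obtain ⟨t, ht⟩ : ∃ t, 2 ^ (m + 1) = t + 1 := ⟨_, (Nat.sub_add_cancel h1).symm⟩
    rw [ht, Nat.add_sub_cancel]
    ring
  apply mul_right_cancel (b := w ^ 2 ^ m)
  rw [← pow_add, hc, pow_mul, hw, one_pow, ← pow_add, ← two_mul, ← pow_succ', hw]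

/-- The value of `α x y ^ n` for a unitary cocycle, `n = 2 ^ (m + 1)` a multiple of the exponent. -/
lemma unitary_pow_exponent (hα : IsCocycle α) (hu : IsUnitary α) {m : ℕ}
    (hG : ∀ g : G, g ^ 2 ^ (m + 1) = 1) (x y : G) :
    α x y ^ 2 ^ (m + 1) = commPairing hα y x ^ 2 ^ m := by
  have h := collect hα (unitary_one hu) x y (2 ^ (m + 1))
  rw [powScalar_eq_one hu _ (orderOf_dvd_of_pow_eq_one (hG _)),
    powScalar_eq_one hu _ (orderOf_dvd_of_pow_eq_one (hG _)),
    powScalar_eq_one hu _ (orderOf_dvd_of_pow_eq_one (hG _)), hG, hG, unitary_one hu,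
    pow_choose_two (by rw [← map_pow, hG, map_one])] at h
  simpa using h

end Commutator

/-! ### Making a cocycle unitary -/

section Modification

variable {G : Type*} [CommGroup G] [Finite G]

/-- Every cocycle can be multiplied by a coboundary so as to become unitary; the commutator
pairing is unchanged. -/
lemma exists_unitary_modification {β : G → G → ℂˣ} (hβ : IsCocycle β) :
    ∃ α : G → G → ℂˣ, IsCocycle α ∧ IsUnitary α ∧
      ∀ x y, α x y / α y x = β x y / β y x := by
  -- The coboundary of `f` multiplies the product over the powers of `g` by `f g ^ orderOf g`.
  have hroot (g : G) : ∃ z : ℂˣ,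
      z ^ orderOf g = (∏ j ∈ Finset.range (orderOf g), β g (g ^ j))⁻¹ := by
    obtain ⟨z, hz⟩ := IsAlgClosed.exists_pow_nat_eq
      (((∏ j ∈ Finset.range (orderOf g), β g (g ^ j))⁻¹ : ℂˣ) : ℂ) (orderOf_pos g)
    have hz0 : z ≠ 0 := by
      rintro rfl
      rw [zero_pow (orderOf_pos g).ne'] at hz
      exact Units.ne_zero _ hz.symm
    exact ⟨Units.mk0 z hz0, by ext; simpa using hz⟩
  choose f hf using hroot
  refine ⟨fun x y => β x y * (f x * f y / f (x * y)), ?_, ?_, ?_⟩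
  · intro x y z
    have e1 : f x * f y / f (x * y) * (f (x * y) * f z / f (x * y * z)) =
        f x * f (y * z) / f (x * (y * z)) * (f y * f z / f (y * z)) := by
      rw [mul_assoc x y z]
      simp only [div_eq_mul_inv]
      have a1 : f (x * y) * (f (x * y))⁻¹ = 1 := mul_inv_cancel _
      have a2 : f (y * z) * (f (y * z))⁻¹ = 1 := mul_inv_cancel _
      calc _ = f x * f y * f z * (f (x * (y * z)))⁻¹ * (f (x * y) * (f (x * y))⁻¹) := by
            simp only [mul_comm, mul_left_comm, mul_assoc]
        _ = f x * f y * f z * (f (x * (y * z)))⁻¹ * (f (y * z) * (f (y * z))⁻¹) := by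
            rw [a1, a2]
        _ = _ := by simp only [mul_comm, mul_left_comm, mul_assoc]
    rw [mul_mul_mul_comm, hβ x y z, e1, mul_mul_mul_comm]
  · intro g
    have ht : ∏ j ∈ Finset.range (orderOf g), f (g ^ j) / f (g ^ (j + 1)) = 1 := by
      rw [Finset.prod_range_div', pow_zero, pow_orderOf_eq_one, div_self']
    simp only [← pow_succ', mul_div_assoc]
    rw [Finset.prod_mul_distrib, Finset.prod_mul_distrib, ht, Finset.prod_const,
      Finset.card_range, hf, mul_one, mul_inv_cancel]
  · intro x y
    beta_reduce
    rw [mul_comm y x, mul_comm (f y) (f x), mul_div_mul_right_eq_div]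

end Modification

/-! ### Commutators of maximal order and copies of `C_n × C_n` -/

section Subgroup

/-- The homomorphism from the cyclic group of order `n` sending the generator to `a`. -/
def zmodHom {A : Type*} [CommGroup A] {n : ℕ} (a : A) (ha : a ^ n = 1) :
    Multiplicative (ZMod n) →* A :=
  AddMonoidHom.toMultiplicativeLeft
    (ZMod.lift n ⟨zmultiplesHom (Additive A) (Additive.ofMul a), by
      simpa [← ofMul_pow] using ha⟩)

lemma zmodHom_apply {A : Type*} [CommGroup A] {n : ℕ} (a : A) (ha : a ^ n = 1) (k : ℤ) :
    zmodHom a ha (Multiplicative.ofAdd (k : ZMod n)) = a ^ k := by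
  simp [zmodHom]

variable {G : Type*} [CommGroup G]

/-- Two elements whose commutator has order `n = exp G` generate a copy of `C_n × C_n`. -/
lemma exists_subgroup_of_orderOf {α : G → G → ℂˣ} (hα : IsCocycle α) {n : ℕ}
    (hG : ∀ g : G, g ^ n = 1) {x y : G} (h : orderOf (commPairing hα y x) = n) :
    ∃ H : Subgroup G,
      Nonempty (↥H ≃* (Multiplicative (ZMod n) × Multiplicative (ZMod n))) := by
  let F := (zmodHom x (hG x)).coprod (zmodHom y (hG y))
  have hF : Function.Injective F := by
    rw [injective_iff_map_eq_one]
    rintro ⟨u, v⟩ huv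
    obtain ⟨a, ha⟩ := ZMod.intCast_surjective (Multiplicative.toAdd u)
    obtain ⟨b, hb⟩ := ZMod.intCast_surjective (Multiplicative.toAdd v)
    obtain rfl : u = Multiplicative.ofAdd (a : ZMod n) := by rw [ha]; rfl
    obtain rfl : v = Multiplicative.ofAdd (b : ZMod n) := by rw [hb]; rfl
    have hxy : x ^ a * y ^ b = 1 := by
      simpa [F, MonoidHom.coprod_apply, zmodHom_apply] using huv
    -- Pairing the relation with `y` kills the power of `y`, and vice versa.
    have hself (g : G) : commPairing hα g g = 1 := by simp [commPairing_apply]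
    have h1 : commPairing hα y x ^ a = 1 := by
      simpa [hself] using congrArg (commPairing hα y) hxy
    have h2 : commPairing hα y x ^ b = 1 := by
      simpa [hself, ← commPairing_inv hα y x] using congrArg (commPairing hα x) hxy
    rw [← orderOf_dvd_iff_zpow_eq_one, h, ← ZMod.intCast_zmod_eq_zero_iff_dvd] at h1 h2
    rw [h1, h2]
    rfl
  exact ⟨F.range, ⟨(MonoidHom.ofInjective hF).symm⟩⟩

/-- If `G` contains `C_n × C_n` with `n = exp G`, then some unitary cocycle has a commutator of
order `n`. -/
lemma exists_unitary_orderOf [Finite G] {n : ℕ} (hn : Monoid.exponent G = n)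
    (H : Subgroup G) (e : ↥H ≃* (Multiplicative (ZMod n) × Multiplicative (ZMod n))) :
    ∃ (α : G → G → ℂˣ) (hα : IsCocycle α) (_ : IsUnitary α) (x y : G),
      orderOf (commPairing hα y x) = n := by
  have hn0 : NeZero n := ⟨hn ▸ Monoid.exponent_ne_zero_of_finite⟩
  have hG (g : G) : g ^ n = 1 := hn ▸ Monoid.pow_exponent_eq_one g
  have : NeZero (Monoid.exponent G) := hn.symm ▸ hn0
  obtain ⟨ζ₀, hζ₀⟩ := HasEnoughRootsOfUnity.exists_primitiveRoot ℂ n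
  obtain ⟨ζ, rfl⟩ := hζ₀.isUnit (NeZero.ne n)
  have hζ : IsPrimitiveRoot ζ n := IsPrimitiveRoot.coe_units_iff.mp hζ₀
  let c := zmodHom ζ hζ.pow_eq_one
  obtain ⟨χ, hχ⟩ := MonoidHom.domRestrict_surjective ℂ H
    ((c.comp (MonoidHom.fst _ _)).comp e.toMonoidHom)
  obtain ⟨ψ, hψ⟩ := MonoidHom.domRestrict_surjective ℂ H
    ((c.comp (MonoidHom.snd _ _)).comp e.toMonoidHom)
  let x : H := e.symm (Multiplicative.ofAdd 1, 1)
  let y : H := e.symm (1, Multiplicative.ofAdd 1)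
  have hc1 : c (Multiplicative.ofAdd 1) = ζ := by
    simpa using zmodHom_apply ζ hζ.pow_eq_one 1
  have hχx : χ x = ζ := by simpa [x, hc1] using DFunLike.congr_fun hχ x
  have hχy : χ y = 1 := by simpa [y] using DFunLike.congr_fun hχ y
  have hψy : ψ y = ζ := by simpa [y, hc1] using DFunLike.congr_fun hψ y
  have hk (h : G) : ∃ k : ℕ, ζ ^ k = ψ h := by
    obtain ⟨k, -, hk⟩ := hζ₀.eq_pow_of_pow_eq_one (ξ := (ψ h : ℂ)) (by
      rw [← Units.val_pow_eq_pow_val, ← map_pow, hG, map_one, Units.val_one])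
    exact ⟨k, Units.ext (by simpa using hk)⟩
  -- `k` is the discrete logarithm of `ψ` to base `ζ`, determined only modulo `n`.
  choose k hk using hk
  have hkmul (g h h' : G) : χ g ^ k (h * h') = χ g ^ k h * χ g ^ k h' := by
    rw [← pow_add]
    have hmod : k (h * h') ≡ k h + k h' [MOD n] := by
      rw [hζ.eq_orderOf, ← pow_eq_pow_iff_modEq, pow_add, hk, hk, hk, map_mul]
    have : orderOf (χ g) ∣ n := orderOf_dvd_of_pow_eq_one (by rw [← map_pow, hG, map_one])
    exact pow_eq_pow_iff_modEq.mpr (hmod.of_dvd this)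
  have hβ : IsCocycle (fun g h : G => χ g ^ k h) := by
    intro a b d
    simp only [hkmul, map_mul, mul_pow, mul_assoc]
  obtain ⟨α, hα, hu, hαβ⟩ := exists_unitary_modification hβ
  refine ⟨α, hα, hu, y, x, ?_⟩
  rw [commPairing_apply, hαβ, hχy, hχx, hk, hψy, one_pow, div_one, ← hζ.eq_orderOf]

end Subgroup

/-- Let `G` be a nontrivial finite abelian `2`-group of exponent `n`.
Then `lcm(exp Zu(G), exp G) = 2^σ · n`, where `σ = 1` if `G` has a subgroup isomorphic to
`C_n × C_n` and `σ = 0` otherwise. -/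
theorem exponent_unitaryCover_of_abelian_two_group
    (G : Type*) [CommGroup G] [Finite G] [Nontrivial G] (hG : IsPGroup 2 G)
    (n : ℕ) (hn : Monoid.exponent G = n) (σ : ℕ)
    (hσ1 : (∃ H : Subgroup G,
      Nonempty (↥H ≃* (Multiplicative (ZMod n) × Multiplicative (ZMod n)))) → σ = 1)
    (hσ0 : (¬ ∃ H : Subgroup G,
      Nonempty (↥H ≃* (Multiplicative (ZMod n) × Multiplicative (ZMod n)))) → σ = 0) :
    Nat.lcm (Monoid.exponent ↥(Zu G)) (Monoid.exponent G) = 2 ^ σ * n := by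
  obtain ⟨m, hm⟩ : ∃ m, n = 2 ^ (m + 1) := by
    obtain ⟨g, hg⟩ := exists_ne (1 : G)
    have : Fact (Nat.Prime 2) := ⟨Nat.prime_two⟩
    have h2 : 2 ∣ n := hn ▸ (hG.dvd_orderOf hg).trans (Monoid.order_dvd_exponent g)
    obtain ⟨r, hr⟩ := (IsPGroup.iff_card.mp hG)
    obtain ⟨m, -, hm⟩ := (Nat.dvd_prime_pow Nat.prime_two).mp
      (hr ▸ hn ▸ Group.exponent_dvd_nat_card : n ∣ 2 ^ r)
    cases m with
    | zero => rw [hm] at h2; norm_num at h2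
    | succ m => exact ⟨m, hm⟩
  have hpow (g : G) : g ^ 2 ^ (m + 1) = 1 := hm ▸ hn ▸ Monoid.pow_exponent_eq_one g
  have hω {α : G → G → ℂˣ} (hα : IsCocycle α) (x y : G) :
      commPairing hα y x ^ 2 ^ (m + 1) = 1 := by rw [← map_pow, hpow, map_one]
  rw [hn]
  by_cases hH : ∃ H : Subgroup G,
      Nonempty (↥H ≃* (Multiplicative (ZMod n) × Multiplicative (ZMod n)))
  · rw [hσ1 hH, pow_one]
    have hle : Nat.lcm (Monoid.exponent ↥(Zu G)) n ∣ 2 * n := by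
      refine Nat.lcm_dvd (Monoid.exponent_dvd_of_forall_pow_eq_one ?_) (dvd_mul_left _ _)
      rintro ⟨α, hα, hu⟩
      ext x y
      have h : α x y ^ (2 * n) = 1 := by
        rw [mul_comm, pow_mul, hm, unitary_pow_exponent hα hu hpow, ← pow_mul, ← pow_succ, hω]
      simpa using congrArg Units.val h
    have hne : ¬ Nat.lcm (Monoid.exponent ↥(Zu G)) n ∣ n := by
      intro hd
      obtain ⟨H, ⟨e⟩⟩ := hH
      obtain ⟨α, hα, hu, x, y, ho⟩ := exists_unitary_orderOf hn H e
      have h1 := Monoid.exponent_dvd_iff_forall_pow_eq_one.mp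
        ((Nat.dvd_lcm_left _ _).trans hd) (⟨α, hα, hu⟩ : Zu G)
      have h2 : α x y ^ n = 1 := congrFun (congrFun (congrArg Subtype.val h1) x) y
      rw [hm, unitary_pow_exponent hα hu hpow] at h2
      have h3 := orderOf_dvd_of_pow_eq_one h2
      rw [ho, hm] at h3
      have := (Nat.pow_dvd_pow_iff_le_right (le_refl 2)).mp h3
      omega
    rw [hm] at hle hne ⊢
    rw [← pow_succ'] at hle ⊢
    obtain ⟨r, hr, hr'⟩ := (Nat.dvd_prime_pow Nat.prime_two).mp hle
    rw [hr'] at hne ⊢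
    have : ¬ r ≤ m + 1 := fun h => hne (pow_dvd_pow 2 h)
    rw [show r = m + 1 + 1 by omega]
  · rw [hσ0 hH, pow_zero, one_mul]
    refine Nat.dvd_antisymm (Nat.lcm_dvd (Monoid.exponent_dvd_of_forall_pow_eq_one ?_) dvd_rfl)
      (Nat.dvd_lcm_right _ _)
    rintro ⟨α, hα, hu⟩
    ext x y
    have h : α x y ^ n = 1 := by
      rw [hm, unitary_pow_exponent hα hu hpow]
      by_contra hne
      have : Fact (Nat.Prime 2) := ⟨Nat.prime_two⟩
      exact hH (exists_subgroup_of_orderOf hα (hm ▸ hpow)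
        (hm ▸ orderOf_eq_prime_pow hne (hω hα x y)))
    simpa using congrArg Units.val h
end

section
/- Let G be a finite 2-group of exponent 2^k, and N a normal abelian subgroup of G having no subgroup isomorphic to C_{2^k} × C_{2^k} (the direct product of two cyclic groups of order 2^k). Assume that either (a) the Schur multiplier M(G/N) is trivial, or (b) G is an internal semidirect product G = N ⋊ H for a subgroup H with exp M(H) dividing exp H. Then exp M(G) divides exp G. -/
/-! ### Powers in abelian groups without `C_e × C_e` -/

/-- In `ZMod (2 ^ (k + 1))` the only nonzero element killed by `2` is `2 ^ k`. -/
lemma zmod_two_torsion (k : ℕ) (a : ZMod (2 ^ (k + 1))) (h : a + a = 0) :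
    a = 0 ∨ a = ((2 ^ k : ℕ) : ZMod (2 ^ (k + 1))) := by
  have : NeZero (2 ^ (k + 1)) := ⟨by positivity⟩
  have hv : a = ((a.val : ℕ) : ZMod (2 ^ (k + 1))) := (ZMod.natCast_zmod_val a).symm
  have hlt : a.val < 2 ^ (k + 1) := ZMod.val_lt a
  generalize a.val = v at hv hlt
  subst hv
  have h2 : ((v + v : ℕ) : ZMod (2 ^ (k + 1))) = 0 := by push_cast; exact h
  rw [ZMod.natCast_eq_zero_iff] at h2
  obtain ⟨c, hc⟩ := h2
  rw [pow_succ] at hc hlt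
  have hc' : v = 2 ^ k * c := by
    have : 2 ^ k * 2 * c = 2 * (2 ^ k * c) := by ring
    omega
  have hc2 : c < 2 := by
    subst hc'
    exact Nat.lt_of_mul_lt_mul_left hlt
  interval_cases c
  · left; simp [hc']
  · right; rw [hc', mul_one]

/-- Two elements of an abelian group of exponent dividing `2 ^ (k + 1)` without a subgroup
`C_{2 ^ (k + 1)} × C_{2 ^ (k + 1)}` satisfy a relation of exponents `2 ^ k`: the homomorphism
`(i, j) ↦ n ^ i * m ^ j` has an element of order two in its kernel. -/
lemma half_pow_cases {A : Type*} [CommGroup A] (k : ℕ) (hA : ∀ x : A, x ^ 2 ^ (k + 1) = 1)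
    (hnosub : ¬ ∃ H : Subgroup A, Nonempty (↥H ≃*
      (Multiplicative (ZMod (2 ^ (k + 1))) × Multiplicative (ZMod (2 ^ (k + 1))))))
    (n m : A) : n ^ 2 ^ k = 1 ∨ m ^ 2 ^ k = 1 ∨ n ^ 2 ^ k * m ^ 2 ^ k = 1 := by
  have : NeZero (2 ^ (k + 1)) := ⟨by positivity⟩
  have key : ∀ x : A, ∃ f : Multiplicative (ZMod (2 ^ (k + 1))) →* A,
      ∀ i : ℕ, f (Multiplicative.ofAdd (i : ZMod (2 ^ (k + 1)))) = x ^ i := by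
    intro x
    let g : ZMod (2 ^ (k + 1)) →+ Additive A :=
      ZMod.lift (2 ^ (k + 1)) ⟨zmultiplesHom (Additive A) (Additive.ofMul x), by
        rw [zmultiplesHom_apply, natCast_zsmul, ← ofMul_pow, hA]; rfl⟩
    refine ⟨AddMonoidHom.toMultiplicativeLeft g, fun i => ?_⟩
    have : g (((i : ℤ) : ZMod (2 ^ (k + 1)))) = Additive.ofMul (x ^ i) := by
      rw [ZMod.lift_coe]
      simp
    rw [Int.cast_natCast] at this
    exact this
  obtain ⟨f, hf⟩ := key n
  obtain ⟨g, hg⟩ := key m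
  set F := f.coprod g with hF
  by_cases hinj : Function.Injective F
  · exact absurd ⟨F.range, ⟨(MonoidHom.ofInjective hinj).symm⟩⟩ hnosub
  · obtain ⟨z, hz, hz1⟩ : ∃ z, F z = 1 ∧ z ≠ 1 := by
      rw [injective_iff_map_eq_one] at hinj
      push Not at hinj
      exact hinj
    have hpz : z ^ 2 ^ (k + 1) = 1 := by
      have : ∀ a : Multiplicative (ZMod (2 ^ (k + 1))), a ^ 2 ^ (k + 1) = 1 := by
        intro a
        apply Multiplicative.toAdd.injective
        simp
      exact Prod.ext (this _) (this _)
    obtain ⟨w, hw, hw1, hw2⟩ : ∃ w, F w = 1 ∧ w ≠ 1 ∧ w * w = 1 := by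
      have hex : ∃ j, z ^ 2 ^ j = 1 := ⟨_, hpz⟩
      classical
      have hspec := Nat.find_spec hex
      have hmin := fun {j} => Nat.find_min (H := hex) (m := j)
      cases hj : Nat.find hex with
      | zero => rw [hj] at hspec; simp at hspec; exact absurd hspec hz1
      | succ j =>
        refine ⟨z ^ 2 ^ j, by rw [map_pow, hz, one_pow], hmin (by omega), ?_⟩
        rw [hj] at hspec
        rw [← pow_two, ← pow_mul, ← pow_succ]; exact hspec
    obtain ⟨a, b⟩ := w
    have ha := zmod_two_torsion k (Multiplicative.toAdd a)
      (congrArg (fun p => Multiplicative.toAdd p.1) hw2)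
    have hb := zmod_two_torsion k (Multiplicative.toAdd b)
      (congrArg (fun p => Multiplicative.toAdd p.2) hw2)
    have hw' : f a * g b = 1 := hw
    have hn : f (Multiplicative.ofAdd ((2 ^ k : ℕ) : ZMod (2 ^ (k + 1)))) = n ^ 2 ^ k := hf _
    have hm : g (Multiplicative.ofAdd ((2 ^ k : ℕ) : ZMod (2 ^ (k + 1)))) = m ^ 2 ^ k := hg _
    rcases ha with ha | ha <;> rcases hb with hb | hb
    · exact absurd (Prod.ext ha hb) hw1
    · have ha' : a = 1 := ha
      have hb' : b = Multiplicative.ofAdd ((2 ^ k : ℕ) : ZMod (2 ^ (k + 1))) := hb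
      rw [ha', hb', map_one, one_mul, hm] at hw'
      exact Or.inr (Or.inl hw')
    · have ha' : a = Multiplicative.ofAdd ((2 ^ k : ℕ) : ZMod (2 ^ (k + 1))) := ha
      have hb' : b = 1 := hb
      rw [ha', hb', map_one, mul_one, hn] at hw'
      exact Or.inl hw'
    · have ha' : a = Multiplicative.ofAdd ((2 ^ k : ℕ) : ZMod (2 ^ (k + 1))) := ha
      have hb' : b = Multiplicative.ofAdd ((2 ^ k : ℕ) : ZMod (2 ^ (k + 1))) := hb
      rw [ha', hb', hn, hm] at hw'
      exact Or.inr (Or.inr hw')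

/-! ### Powers in groups of nilpotency class two -/

lemma pow_mul_of_comm {E : Type*} [Group E] {x y c : E} (hc : ∀ z, Commute c z)
    (h : y * x = c * (x * y)) (n : ℕ) : y ^ n * x = c ^ n * (x * y ^ n) := by
  induction n with
  | zero => simp
  | succ n ih =>
    calc y ^ (n + 1) * x = y ^ n * (y * x) := by rw [pow_succ, mul_assoc]
      _ = c * (y ^ n * x) * y := by
        rw [h, ← mul_assoc, ← (hc (y ^ n)).eq]; simp only [mul_assoc]
      _ = c ^ (n + 1) * (x * y ^ (n + 1)) := by
        rw [ih, pow_succ', pow_succ]; simp only [mul_assoc]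

lemma mul_pow_of_comm {E : Type*} [Group E] {x y c : E} (hc : ∀ z, Commute c z)
    (h : y * x = c * (x * y)) (n : ℕ) :
    (x * y) ^ n = c ^ (n.choose 2) * (x ^ n * y ^ n) := by
  induction n with
  | zero => simp
  | succ n ih =>
    have h1 : (n + 1).choose 2 = n.choose 2 + n := by
      rw [Nat.choose_succ_succ' n 1, Nat.choose_one_right, add_comm]
    calc (x * y) ^ (n + 1) = c ^ (n.choose 2) * (x ^ n * (y ^ n * x) * y) := by
          rw [pow_succ, ih]; simp only [mul_assoc]
      _ = c ^ (n.choose 2) * (c ^ n * (x ^ n * (x * y ^ n)) * y) := by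
          rw [pow_mul_of_comm hc h, ← mul_assoc (x ^ n), ← ((hc (x ^ n)).pow_left n).eq]
          simp only [mul_assoc]
      _ = c ^ ((n + 1).choose 2) * (x ^ (n + 1) * y ^ (n + 1)) := by
          rw [h1, pow_add, pow_succ x, pow_succ y]; simp only [mul_assoc]

/-! ### The central extension of a cocycle -/

/-- The central extension of `G` by `ℂˣ` attached to the cocycle `α`: the set `G × ℂˣ` with
`(x, a) * (y, b) = (x * y, a * b * α x y)`.  As `α` need not be normalized, the identity is
`(1, (α 1 1)⁻¹)`. -/
@[ext] structure CentExt {G : Type*} [Group G] (α : Z2 G) where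
  /-- The image in `G`. -/
  fst : G
  /-- The scalar relative to the standard section. -/
  snd : ℂˣ

namespace CentExt

variable {G : Type*} [Group G] {α : Z2 G}

lemma cocycle (α : Z2 G) (x y z : G) :
    α.1 x y * α.1 (x * y) z = α.1 x (y * z) * α.1 y z := α.2 x y z

lemma one_left (α : Z2 G) (x : G) : α.1 1 x = α.1 1 1 := by
  have := cocycle α 1 1 x
  simp only [one_mul] at this
  exact (mul_right_cancel this).symm

lemma one_right (α : Z2 G) (x : G) : α.1 x 1 = α.1 1 1 := by
  have := cocycle α x 1 1
  simp only [mul_one] at this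
  exact mul_left_cancel this

instance : Mul (CentExt α) := ⟨fun x y => ⟨x.fst * y.fst, x.snd * y.snd * α.1 x.fst y.fst⟩⟩
instance : One (CentExt α) := ⟨⟨1, (α.1 1 1)⁻¹⟩⟩
instance : Inv (CentExt α) :=
  ⟨fun x => ⟨x.fst⁻¹, (x.snd * α.1 x.fst⁻¹ x.fst)⁻¹ * (α.1 1 1)⁻¹⟩⟩

@[simp] lemma mul_fst (x y : CentExt α) : (x * y).fst = x.fst * y.fst := rfl
@[simp] lemma mul_snd (x y : CentExt α) : (x * y).snd = x.snd * y.snd * α.1 x.fst y.fst := rfl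
@[simp] lemma one_fst : (1 : CentExt α).fst = 1 := rfl
@[simp] lemma one_snd : (1 : CentExt α).snd = (α.1 1 1)⁻¹ := rfl
@[simp] lemma inv_fst (x : CentExt α) : (x⁻¹).fst = x.fst⁻¹ := rfl
@[simp] lemma inv_snd (x : CentExt α) :
    (x⁻¹).snd = (x.snd * α.1 x.fst⁻¹ x.fst)⁻¹ * (α.1 1 1)⁻¹ := rfl

instance : Group (CentExt α) := Group.ofLeftAxioms
  (by
    intro x y z
    ext1
    · simp [mul_assoc]
    · simp only [mul_snd, mul_fst]
      have h := cocycle α x.fst y.fst z.fst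
      calc x.snd * y.snd * α.1 x.fst y.fst * z.snd * α.1 (x.fst * y.fst) z.fst
          = x.snd * y.snd * z.snd * (α.1 x.fst y.fst * α.1 (x.fst * y.fst) z.fst) := by
            ac_rfl
        _ = x.snd * (y.snd * z.snd * α.1 y.fst z.fst) * α.1 x.fst (y.fst * z.fst) := by
            rw [h]; ac_rfl)
  (by
    intro x
    ext1
    · simp
    · simp only [mul_snd, one_snd, one_fst, one_left α x.fst]
      rw [mul_right_comm, inv_mul_cancel, one_mul])
  (by
    intro x
    ext1
    · simp
    · simp only [mul_snd, one_snd, inv_snd, inv_fst]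
      rw [mul_inv]
      generalize α.1 x.fst⁻¹ x.fst = u
      generalize α.1 1 1 = v
      generalize x.snd = w
      calc w⁻¹ * u⁻¹ * v⁻¹ * w * u = (w⁻¹ * w) * (u⁻¹ * u) * v⁻¹ := by ac_rfl
        _ = v⁻¹ := by simp)

/-- The projection onto `G`. -/
def proj (α : Z2 G) : CentExt α →* G where
  toFun := fst
  map_one' := rfl
  map_mul' _ _ := rfl

/-- The inclusion of the scalars. -/
def scal (α : Z2 G) : ℂˣ →* CentExt α where
  toFun a := ⟨1, a * (α.1 1 1)⁻¹⟩
  map_one' := by ext1 <;> simp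
  map_mul' a b := by
    ext1
    · simp
    · simp only [mul_snd]
      generalize α.1 1 1 = v
      calc a * b * v⁻¹ = a * b * v⁻¹ * (v⁻¹ * v) := by simp
        _ = a * v⁻¹ * (b * v⁻¹) * v := by ac_rfl

lemma scal_mul (a : ℂˣ) (x : CentExt α) : scal α a * x = ⟨x.fst, a * x.snd⟩ := by
  ext1
  · simp [scal]
  · simp only [mul_snd, scal, MonoidHom.coe_mk, OneHom.coe_mk, one_left α x.fst]
    rw [mul_assoc a, mul_assoc a, mul_right_comm, inv_mul_cancel, one_mul]

lemma mul_scal (a : ℂˣ) (x : CentExt α) : x * scal α a = ⟨x.fst, a * x.snd⟩ := by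
  ext1
  · simp [scal]
  · simp only [mul_snd, scal, MonoidHom.coe_mk, OneHom.coe_mk, one_right α x.fst]
    rw [mul_assoc, mul_assoc, inv_mul_cancel, mul_one, mul_comm]

lemma scal_commute (a : ℂˣ) (x : CentExt α) : Commute (scal α a) x := by
  rw [Commute, SemiconjBy, scal_mul, mul_scal]

lemma scal_injective : Function.Injective (scal α) := fun a b h => by
  have h := congrArg snd h
  simpa [scal] using h

lemma eq_scal {x y : CentExt α} (h : x.fst = y.fst) : x = scal α (x.snd * y.snd⁻¹) * y := by
  rw [scal_mul]
  ext1
  · exact h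
  · simp

lemma eq_scal_of_fst {x : CentExt α} (h : x.fst = 1) : ∃ a, x = scal α a :=
  ⟨_, (eq_scal (y := 1) h).trans (mul_one _)⟩

lemma pow_fst (x : CentExt α) (n : ℕ) : (x ^ n).fst = x.fst ^ n := map_pow (proj α) x n

end CentExt

open CentExt

section

variable {G : Type*} [Group G] {N : Subgroup G} {k : ℕ}

/-- The commutator `c` of lifts of two elements of `N` is a scalar with
`c ^ (e / 2) = 1`, where `e = 2 ^ (k + 1)`. -/
lemma comm_half_pow (α : Z2 G) (hab : ∀ x y : ↥N, x * y = y * x)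
    (hrel : ∀ n m : ↥N, n ^ 2 ^ k = 1 ∨ m ^ 2 ^ k = 1 ∨ n ^ 2 ^ k * m ^ 2 ^ k = 1)
    {x y : CentExt α} (hx : x.fst ∈ N) (hy : y.fst ∈ N) :
    ∃ c : CentExt α, (∀ z, Commute c z) ∧ y * x = c * (x * y) ∧ c ^ 2 ^ k = 1 := by
  have hfst : (y * x).fst = (x * y).fst := congrArg Subtype.val (hab ⟨_, hy⟩ ⟨_, hx⟩)
  have h := eq_scal hfst
  generalize (y * x).snd * ((x * y).snd)⁻¹ = a at h
  have hc : ∀ z, Commute (scal α a) z := scal_commute a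
  refine ⟨scal α a, hc, h, ?_⟩
  have hy2 := pow_mul_of_comm hc h (2 ^ k)
  -- `c ^ 2 ^ k` is the commutator of `y ^ 2 ^ k` and `x`.
  have fin : Commute (y ^ 2 ^ k) x → scal α a ^ 2 ^ k = 1 := fun hcomm => by
    rw [hcomm.eq] at hy2
    exact (mul_eq_right.mp hy2.symm)
  rcases hrel ⟨_, hx⟩ ⟨_, hy⟩ with h1 | h1 | h1
  · -- Here `x ^ 2 ^ k` is central, so the roles of `x` and `y` are exchanged.
    have h1' : (x ^ 2 ^ k).fst = 1 := by
      rw [pow_fst]; exact congrArg Subtype.val h1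
    obtain ⟨b, hb⟩ := eq_scal_of_fst h1'
    have h' : x * y = scal α a⁻¹ * (y * x) := by
      rw [h, ← mul_assoc, ← map_mul, inv_mul_cancel, map_one, one_mul]
    have hx2 := pow_mul_of_comm (scal_commute a⁻¹) h' (2 ^ k)
    rw [hb, (scal_commute b y).eq] at hx2
    have := mul_eq_right.mp hx2.symm
    rw [map_inv, inv_pow, inv_eq_one] at this
    exact this
  · have h1' : (y ^ 2 ^ k).fst = 1 := by
      rw [pow_fst]; exact congrArg Subtype.val h1
    obtain ⟨b, hb⟩ := eq_scal_of_fst h1'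
    exact fin (hb ▸ scal_commute b x)
  · have h1' : (x ^ 2 ^ k * y ^ 2 ^ k).fst = 1 := by
      rw [mul_fst, pow_fst, pow_fst]; exact congrArg Subtype.val h1
    obtain ⟨b, hb⟩ := eq_scal_of_fst h1'
    apply fin
    rw [← eq_inv_mul_iff_mul_eq] at hb
    rw [hb]
    exact ((Commute.refl x).pow_left _).inv_left.mul_left (scal_commute b x)

/-- The subgroup `K` of the elements lying over `N` whose `e`-th power is trivial,
`e = 2 ^ (k + 1)`. -/
def powKer (α : Z2 G) (hab : ∀ x y : ↥N, x * y = y * x)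
    (hrel : ∀ n m : ↥N, n ^ 2 ^ k = 1 ∨ m ^ 2 ^ k = 1 ∨ n ^ 2 ^ k * m ^ 2 ^ k = 1) :
    Subgroup (CentExt α) where
  carrier := {x | x.fst ∈ N ∧ x ^ 2 ^ (k + 1) = 1}
  one_mem' := ⟨N.one_mem, one_pow _⟩
  mul_mem' := by
    rintro x y ⟨hx, hx1⟩ ⟨hy, hy1⟩
    refine ⟨N.mul_mem hx hy, ?_⟩
    obtain ⟨c, hc, h, hc1⟩ := comm_half_pow α hab hrel hx hy
    -- `e.choose 2 = (e / 2) * (e - 1)`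
    have hch : (2 ^ (k + 1)).choose 2 = 2 ^ k * (2 ^ (k + 1) - 1) := by
      rw [Nat.choose_two_right, pow_succ, mul_right_comm, Nat.mul_div_cancel _ two_pos]
    rw [mul_pow_of_comm hc h, hx1, hy1, hch, pow_mul, hc1]
    simp
  inv_mem' := by
    rintro x ⟨hx, hx1⟩
    exact ⟨N.inv_mem hx, by rw [inv_pow, hx1, inv_one]⟩

lemma units_exists_pow (n : ℕ) (hn : n ≠ 0) (a : ℂˣ) : ∃ d : ℂˣ, d ^ n = a := by
  obtain ⟨z, hz⟩ := IsAlgClosed.exists_pow_nat_eq (a : ℂ) (Nat.pos_of_ne_zero hn)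
  have hz0 : z ≠ 0 := by
    rintro rfl
    rw [zero_pow hn] at hz
    exact a.ne_zero hz.symm
  exact ⟨Units.mk0 z hz0, Units.ext (by simpa using hz)⟩

/-- The `e`-th power of a cocycle on `G` is cohomologous to a cocycle inflated from `G ⧸ N`. -/
lemma exists_inflation [N.Normal] (α : Z2 G) (hab : ∀ x y : ↥N, x * y = y * x)
    (hrel : ∀ n m : ↥N, n ^ 2 ^ k = 1 ∨ m ^ 2 ^ k = 1 ∨ n ^ 2 ^ k * m ^ 2 ^ k = 1)
    (hexp : ∀ n ∈ N, n ^ 2 ^ (k + 1) = 1) :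
    ∃ (ζ : G → ℂˣ) (β : Z2 (G ⧸ N)), ∀ x y : G,
      α.1 x y ^ 2 ^ (k + 1) * (ζ x * ζ y * (ζ (x * y))⁻¹) = β.1 x y := by
  set e := 2 ^ (k + 1) with he
  set K := powKer α hab hrel with hK
  have memK : ∀ x, x ∈ K ↔ x.fst ∈ N ∧ x ^ e = 1 := fun x => Iff.rfl
  have : K.Normal := ⟨fun x hx g => by
    rw [memK] at hx ⊢
    refine ⟨Subgroup.Normal.conj_mem ‹_› _ hx.1 g.fst, ?_⟩
    rw [conj_pow, hx.2, mul_one, mul_inv_cancel]⟩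
  -- `K` maps onto `N`: a lift of `n` is corrected by an `e`-th root of its `e`-th power.
  have surj : ∀ n ∈ N, ∃ x ∈ K, x.fst = n := by
    intro n hn
    let s : CentExt α := ⟨n, 1⟩
    obtain ⟨a, ha⟩ := eq_scal_of_fst (x := s ^ e) (by rw [pow_fst]; exact hexp n hn)
    obtain ⟨d, hd⟩ := units_exists_pow e (by positivity) a⁻¹
    have hf : (scal α d * s).fst = n := by rw [scal_mul]
    refine ⟨scal α d * s, (memK _).2 ⟨by rw [hf]; exact hn, ?_⟩, hf⟩
    rw [(scal_commute d s).mul_pow, ha, ← map_pow, hd, ← map_mul, inv_mul_cancel, map_one]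
  -- A section `s` of `CentExt α → G` whose reduction modulo `K` factors through `G ⧸ N`.
  have hsec : ∀ g : G, ∃ x : CentExt α, x.fst = g ∧
      (x : CentExt α ⧸ K) = ((⟨(g : G ⧸ N).out, 1⟩ : CentExt α) : CentExt α ⧸ K) := by
    intro g
    obtain ⟨x, hx, hxn⟩ := surj ((g : G ⧸ N).out⁻¹ * g) (by
      rw [← QuotientGroup.eq, QuotientGroup.out_eq'])
    refine ⟨⟨(g : G ⧸ N).out, 1⟩ * x, by simp [hxn], ?_⟩
    rw [QuotientGroup.mk_mul, (QuotientGroup.eq_one_iff x).2 hx, mul_one]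
  choose s hs1 hs2 using hsec
  let δ : G → G → ℂˣ := fun x y => α.1 x y * ((s x).snd * (s y).snd * (s (x * y)).snd⁻¹)
  have hδ : ∀ x y, scal α (δ x y) = s x * s y * (s (x * y))⁻¹ := by
    intro x y
    rw [eq_mul_inv_iff_mul_eq, scal_mul]
    ext1
    · simp [hs1]
    · simp only [mul_snd, hs1, δ]
      rw [mul_assoc, inv_mul_cancel_right, mul_comm]
  have hδK : ∀ x y x' y' : G, (x : G ⧸ N) = x' → (y : G ⧸ N) = y' → δ x y ^ e = δ x' y' ^ e := by
    intro x y x' y' hx hy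
    have hxy : ((x * y : G) : G ⧸ N) = ((x' * y' : G) : G ⧸ N) := by
      rw [QuotientGroup.mk_mul, hx, hy, QuotientGroup.mk_mul]
    have h : (scal α (δ x y) : CentExt α ⧸ K) = scal α (δ x' y') := by
      rw [hδ, hδ]
      simp only [QuotientGroup.mk_mul, QuotientGroup.mk_inv, hs2, hx, hy, hxy]
    rw [QuotientGroup.eq, ← map_inv, ← map_mul, memK, ← map_pow] at h
    have h2 := scal_injective (h.2.trans (map_one _).symm)
    rwa [mul_pow, inv_pow, inv_mul_eq_one] at h2
  have hcoc : ∀ x y z : G, δ x y * δ (x * y) z = δ x (y * z) * δ y z := by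
    intro x y z
    have h := cocycle α x y z
    simp only [δ]
    generalize (s x).snd = a, (s y).snd = b, (s z).snd = c, h1 : (s (x * y)).snd = d
    rw [mul_assoc x y z]
    generalize (s (x * (y * z))).snd = f, (s (y * z)).snd = g
    calc _ = (α.1 x y * α.1 (x * y) z) * (a * b * c * f⁻¹) * (d⁻¹ * d) := by ac_rfl
      _ = (α.1 x (y * z) * α.1 y z) * (a * b * c * f⁻¹) * (g⁻¹ * g) := by rw [h]; simp
      _ = _ := by ac_rfl
  have hout : ∀ x y : G, δ (x : G ⧸ N).out (y : G ⧸ N).out ^ e = δ x y ^ e := fun x y =>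
    hδK _ _ _ _ (QuotientGroup.out_eq' _) (QuotientGroup.out_eq' _)
  refine ⟨fun g => (s g).snd ^ e, ⟨fun q r => δ q.out r.out ^ e, ?_⟩, fun x y => ?_⟩
  · intro q r t
    induction q using QuotientGroup.induction_on with | H x => ?_
    induction r using QuotientGroup.induction_on with | H y => ?_
    induction t using QuotientGroup.induction_on with | H z => ?_
    simp only [← QuotientGroup.mk_mul, hout]
    rw [← mul_pow, hcoc, mul_pow]
  · simp only [hout, δ, mul_pow, inv_pow]

end

/-- Let `G` be a finite `2`-group of exponent `2^k` and `N` a normal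
abelian subgroup having no subgroup isomorphic to `C_{2^k} × C_{2^k}`.  If either
`M(G/N)` is trivial, or `G = N ⋊ H` with `exp M(H) ∣ exp H`, then `exp M(G)` divides
`exp G`. -/
theorem exponent_schurMultiplier_dvd_exponent_of_abelian_kernel
    (G : Type*) [Group G] [Finite G] (hG : IsPGroup 2 G)
    (k : ℕ) (hexp : Monoid.exponent G = 2 ^ k)
    (N : Subgroup G) [N.Normal]
    (hab : ∀ x y : ↥N, x * y = y * x)
    (hnosub : ¬ ∃ H : Subgroup ↥N,
      Nonempty (↥H ≃* (Multiplicative (ZMod (2 ^ k)) × Multiplicative (ZMod (2 ^ k)))))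
    (hcase : Subsingleton (SchurM (G ⧸ N)) ∨
      ∃ H : Subgroup G, N ⊓ H = ⊥ ∧ N ⊔ H = ⊤ ∧
        Monoid.exponent (SchurM ↥H) ∣ Monoid.exponent ↥H) :
    Monoid.exponent (SchurM G) ∣ Monoid.exponent G := by
  have hpow : ∀ g : G, g ^ 2 ^ k = 1 := fun g => hexp ▸ Monoid.pow_exponent_eq_one g
  rw [hexp]
  apply Monoid.exponent_dvd_of_forall_pow_eq_one
  intro q
  induction q using QuotientGroup.induction_on with | H α => ?_
  rw [← QuotientGroup.mk_pow, QuotientGroup.eq_one_iff, Subgroup.mem_subgroupOf]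
  cases k with
  | zero =>
    -- `C_1 × C_1` is the trivial group, which embeds in `N`.
    have : Subsingleton (ZMod (2 ^ 0)) := inferInstanceAs (Subsingleton (ZMod 1))
    have : Unique (Multiplicative (ZMod (2 ^ 0)) × Multiplicative (ZMod (2 ^ 0))) :=
      ⟨⟨1⟩, fun a => Prod.ext (Subsingleton.elim (α := ZMod (2 ^ 0)) _ _)
        (Subsingleton.elim (α := ZMod (2 ^ 0)) _ _)⟩
    exact absurd ⟨⊥, ⟨MulEquiv.ofUnique⟩⟩ hnosub
  | succ k =>
  have hrel : ∀ n m : ↥N, n ^ 2 ^ k = 1 ∨ m ^ 2 ^ k = 1 ∨ n ^ 2 ^ k * m ^ 2 ^ k = 1 := by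
    let _ : CommGroup ↥N := { (inferInstance : Group ↥N) with mul_comm := hab }
    exact half_pow_cases k (fun x => Subtype.ext (hpow x)) hnosub
  obtain ⟨ζ, β, hβ⟩ := exists_inflation α hab hrel (fun n _ => hpow n)
  suffices hB : β.1 ∈ B2 (G ⧸ N) by
    obtain ⟨η, hη⟩ := hB
    refine ⟨fun g => η g * (ζ g)⁻¹, fun x y => ?_⟩
    have h := hβ x y
    have hη' : β.1 x y = η x * η y * (η ((x * y : G) : G ⧸ N))⁻¹ := hη x y
    rw [hη', ← eq_mul_inv_iff_mul_eq] at h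
    change α.1 x y ^ 2 ^ (k + 1) = _
    rw [h]
    have hcomm : ∀ a b c d u v : ℂˣ,
        a * b * u⁻¹ * (c * d * v⁻¹)⁻¹ = a * c⁻¹ * (b * d⁻¹) * (u * v⁻¹)⁻¹ := by
      intro a b c d u v
      simp only [← div_eq_mul_inv, div_div_div_eq, div_mul_div_comm]
      rw [mul_comm u]
    exact hcomm _ _ _ _ _ _
  rcases hcase with hsub | ⟨H, hinf, hsup, hH⟩
  · have := Subsingleton.elim (QuotientGroup.mk β : SchurM (G ⧸ N)) 1
    rwa [QuotientGroup.eq_one_iff, Subgroup.mem_subgroupOf] at this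
  · let αH : Z2 ↥H := ⟨fun x y => α.1 x y, fun x y z => α.2 x y z⟩
    have hdvd : Monoid.exponent (SchurM ↥H) ∣ 2 ^ (k + 1) :=
      hH.trans (Monoid.exponent_dvd_of_forall_pow_eq_one fun x => Subtype.ext (hpow x))
    have hαH : (αH ^ 2 ^ (k + 1)).1 ∈ B2 ↥H := by
      have := (Monoid.exponent_dvd_iff_forall_pow_eq_one.1 hdvd) (QuotientGroup.mk αH)
      rwa [← QuotientGroup.mk_pow, QuotientGroup.eq_one_iff, Subgroup.mem_subgroupOf] at this
    obtain ⟨η, hη⟩ := hαH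
    have hη' : ∀ x y : ↥H, α.1 x y ^ 2 ^ (k + 1) = η x * η y * (η (x * y))⁻¹ := hη
    -- The projection `H → G ⧸ N` is bijective.
    have hrep : ∀ q : G ⧸ N, ∃ h : ↥H, ((h : G) : G ⧸ N) = q := by
      intro q
      induction q using QuotientGroup.induction_on with | H g => ?_
      obtain ⟨n, hn, h, hh, rfl⟩ := Subgroup.mem_sup_of_normal_left.1 (hsup ▸ Subgroup.mem_top g)
      refine ⟨⟨h, hh⟩, ?_⟩
      rw [QuotientGroup.mk_mul, (QuotientGroup.eq_one_iff n).2 hn, one_mul]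
    have hinj : ∀ x y : ↥H, ((x : G) : G ⧸ N) = ((y : G) : G ⧸ N) → x = y := by
      intro x y hxy
      rw [QuotientGroup.eq] at hxy
      have : (x : G)⁻¹ * y ∈ N ⊓ H := ⟨hxy, H.mul_mem (H.inv_mem x.2) y.2⟩
      rw [hinf, Subgroup.mem_bot, inv_mul_eq_one] at this
      exact Subtype.ext this
    choose r hr using hrep
    have hrmul : ∀ p q, r (p * q) = r p * r q := fun p q => hinj _ _ (by
      rw [hr, Subgroup.coe_mul, QuotientGroup.mk_mul, hr, hr])
    refine ⟨fun q => η (r q) * ζ (r q), fun p q => ?_⟩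
    have h := hβ (r p) (r q)
    rw [hr, hr, hη', ← Subgroup.coe_mul, ← hrmul] at h
    simp only [← h, mul_inv]
    ac_rfl
end

section
/- Let p be an odd prime and G a nontrivial regular finite p-group such that exp M(G/℧(G)) divides p, where ℧(G) = ⟨g^p : g ∈ G⟩. Then exp M(G) divides exp G. -/
instance agemo_normal (p : ℕ) (G : Type*) [Group G] : (agemo p G).Normal := by
  constructor
  intro n hn g
  have key : (agemo p G).map (MulAut.conj g).toMonoidHom ≤ agemo p G := by
    rw [agemo, MonoidHom.map_closure]
    apply Subgroup.closure_mono
    rintro x ⟨y, ⟨z, rfl⟩, rfl⟩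
    exact ⟨g * z * g⁻¹, by simp [conj_pow]⟩
  exact key ⟨n, hn, rfl⟩

/-- A `p`-group `G` is regular if for all `x, y ∈ G` there is `c` in the derived subgroup
of `⟨x, y⟩` with `(xy)^p = x^p y^p c^p`. -/
def IsRegularPGroup (p : ℕ) (G : Type*) [Group G] : Prop :=
  ∀ x y : G, ∃ c ∈ ⁅Subgroup.closure {x, y}, Subgroup.closure {x, y}⁆,
    (x * y) ^ p = x ^ p * y ^ p * c ^ p

open scoped commutatorElement

universe u

/-! ### Powers in regular groups and the agemo series -/

/-- A nilpotent group generated by an element `a` and an element `c` of its derived subgroup is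
abelian: derived elements are non-generators. -/
theorem commute_of_closure_pair_eq_top (H : Type*) [Group H] [Group.IsNilpotent H] :
    ∀ a c : H, c ∈ commutator H → Subgroup.closure {a, c} = ⊤ → ∀ x y : H, x * y = y * x := by
  refine Group.nilpotent_center_quotient_ind (P := fun H _ _ => ∀ a c : H, c ∈ commutator H →
    Subgroup.closure {a, c} = ⊤ → ∀ x y : H, x * y = y * x) H ?_ ?_
  · intro H _ _ a c _ _ x y
    exact Subsingleton.elim _ _
  · intro H _ _ ih a c hc htop
    set f := QuotientGroup.mk' (Subgroup.center H) with hf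
    have hsurj : Function.Surjective f := QuotientGroup.mk'_surjective _
    have hcomm := ih (f a) (f c)
      (by
        have h := Subgroup.mem_map_of_mem f hc
        rw [commutator_def, Subgroup.map_commutator] at h
        exact Subgroup.commutator_mono le_top le_top h)
      (by
        have h := congrArg (Subgroup.map f) htop
        rwa [MonoidHom.map_closure, Set.image_pair, Subgroup.map_top_of_surjective f hsurj] at h)
    -- The central quotient is abelian, so the derived element `c` is central.
    have hle : commutator H ≤ Subgroup.center H := by
      rw [commutator_def, Subgroup.commutator_le]
      intro x _ y _
      rw [← QuotientGroup.ker_mk' (Subgroup.center H), MonoidHom.mem_ker, map_commutatorElement,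
        commutatorElement_eq_one_iff_mul_comm]
      exact hcomm _ _
    have hcc := Subgroup.mem_center_iff.mp (hle hc)
    have hab : Subgroup.closure {a, c} ≤ Subgroup.centralizer (Subgroup.closure {a, c} : Set H) := by
      rw [Subgroup.centralizer_closure, Subgroup.closure_le]
      rintro x (rfl | rfl) <;> rw [SetLike.mem_coe, Subgroup.mem_centralizer_iff] <;>
        rintro y (rfl | rfl)
      · rfl
      · exact (hcc _).symm
      · exact hcc _
      · rfl
    intro x y
    have hx : x ∈ Subgroup.closure {a, c} := htop ▸ Subgroup.mem_top x
    have hy : y ∈ Subgroup.closure {a, c} := htop ▸ Subgroup.mem_top y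
    exact Subgroup.mem_centralizer_iff.mp (hab hy) x hx

/-- In a regular `p`-group the product of two `p`-th powers is a `p`-th power. The corrections
supplied by regularity live in strictly smaller subgroups, by non-generation. -/
theorem exists_pow_eq_mul_pow {p : ℕ} {G : Type*} [Group G] [Finite G] [Group.IsNilpotent G]
    (hreg : IsRegularPGroup p G) (x y : G) :
    ∃ z ∈ Subgroup.closure {x, y}, x ^ p * y ^ p = z ^ p := by
  induction hn : Nat.card (Subgroup.closure {x, y}) using Nat.strong_induction_on
    generalizing x y with
  | _ n ih =>
    obtain ⟨c, hc, hpow⟩ := hreg x y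
    have hx : x ∈ Subgroup.closure {x, y} := Subgroup.subset_closure (by simp)
    have hy : y ∈ Subgroup.closure {x, y} := Subgroup.subset_closure (by simp)
    have hcH : c ∈ Subgroup.closure {x, y} := Subgroup.commutator_le_self _ hc
    have hle : Subgroup.closure {x * y, c⁻¹} ≤ Subgroup.closure {x, y} := by
      rw [Subgroup.closure_le]
      rintro _ (rfl | rfl)
      · exact mul_mem hx hy
      · exact inv_mem hcH
    have hrw : x ^ p * y ^ p = (x * y) ^ p * c⁻¹ ^ p := by rw [hpow, inv_pow]; group
    rcases hle.eq_or_lt with heq | hlt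
    · have hab := commute_of_closure_pair_eq_top (Subgroup.closure {x, y})
        ⟨x * y, mul_mem hx hy⟩ ⟨c⁻¹, inv_mem hcH⟩
        (by
          rw [← Subgroup.map_subtype_commutator] at hc
          obtain ⟨d, hd, hdc⟩ := hc
          have : (⟨c⁻¹, inv_mem hcH⟩ : Subgroup.closure {x, y}) = d⁻¹ := by
            ext; simp [← hdc]
          rw [this]; exact inv_mem hd)
        (by
          apply Subgroup.map_injective (Subgroup.subtype_injective (Subgroup.closure {x, y}))
          rw [MonoidHom.map_closure, Set.image_pair, ← MonoidHom.range_eq_map,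
            Subgroup.range_subtype]
          exact heq)
        ⟨x, hx⟩ ⟨y, hy⟩
      exact ⟨x * y, mul_mem hx hy, (Commute.mul_pow (congrArg Subtype.val hab) p).symm⟩
    · have hcard := Set.Finite.card_lt_card (Set.toFinite _) (SetLike.coe_ssubset_coe.mpr hlt)
      obtain ⟨z, hz, hzp⟩ := ih _ (hn ▸ hcard) (x * y) c⁻¹ rfl
      exact ⟨z, hle hz, hrw.trans hzp⟩

/-- The iterated agemo series `G = ℧⁰ ≥ ℧¹ ≥ …`, each term generated by the `p`-th powers of the
elements of the previous one. -/
def agemoSeries (p : ℕ) (G : Type*) [Group G] : ℕ → Subgroup G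
  | 0 => ⊤
  | i + 1 => Subgroup.closure {x | ∃ g ∈ agemoSeries p G i, g ^ p = x}

theorem agemoSeries_one (p : ℕ) (G : Type*) [Group G] : agemoSeries p G 1 = agemo p G := by
  simp [agemoSeries, agemo]

theorem pow_mem_agemoSeries {p : ℕ} {G : Type*} [Group G] {i : ℕ} {x : G}
    (hx : x ∈ agemoSeries p G i) : x ^ p ∈ agemoSeries p G (i + 1) :=
  Subgroup.subset_closure ⟨x, hx, rfl⟩

instance agemoSeries_normal (p : ℕ) (G : Type*) [Group G] (i : ℕ) :
    (agemoSeries p G i).Normal := by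
  induction i with
  | zero => exact inferInstanceAs (⊤ : Subgroup G).Normal
  | succ i ih =>
    refine ⟨fun n hn g => ?_⟩
    have key : (agemoSeries p G (i + 1)).map (MulAut.conj g).toMonoidHom ≤
        agemoSeries p G (i + 1) := by
      rw [agemoSeries, MonoidHom.map_closure]
      apply Subgroup.closure_mono
      rintro x ⟨y, ⟨z, hz, rfl⟩, rfl⟩
      exact ⟨g * z * g⁻¹, ih.conj_mem z hz g, by simp [conj_pow]⟩
    exact key ⟨n, hn, rfl⟩

theorem exists_pow_eq_of_mem_agemoSeries_succ {p : ℕ} {G : Type*} [Group G] [Finite G]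
    [Group.IsNilpotent G] (hreg : IsRegularPGroup p G) {i : ℕ} {x : G}
    (hx : x ∈ agemoSeries p G (i + 1)) : ∃ g ∈ agemoSeries p G i, g ^ p = x := by
  rw [agemoSeries] at hx
  induction hx using Subgroup.closure_induction with
  | mem x hx => exact hx
  | one => exact ⟨1, one_mem _, one_pow p⟩
  | mul x y _ _ hx hy =>
    obtain ⟨a, ha, rfl⟩ := hx
    obtain ⟨b, hb, rfl⟩ := hy
    obtain ⟨z, hz, hzp⟩ := exists_pow_eq_mul_pow hreg a b
    refine ⟨z, ?_, hzp.symm⟩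
    refine (Subgroup.closure_le _).mpr ?_ hz
    rintro _ (rfl | rfl) <;> assumption
  | inv x _ hx =>
    obtain ⟨a, ha, rfl⟩ := hx
    exact ⟨a⁻¹, inv_mem ha, inv_pow a p⟩

theorem exists_pow_pow_eq_of_mem_agemoSeries {p : ℕ} {G : Type*} [Group G] [Finite G]
    [Group.IsNilpotent G] (hreg : IsRegularPGroup p G) (i : ℕ) :
    ∀ x ∈ agemoSeries p G i, ∃ g : G, g ^ p ^ i = x := by
  induction i with
  | zero => intro x _; exact ⟨x, by simp⟩
  | succ i ih =>
    intro x hx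
    obtain ⟨y, hy, rfl⟩ := exists_pow_eq_of_mem_agemoSeries_succ hreg hx
    obtain ⟨g, rfl⟩ := ih y hy
    exact ⟨g, by rw [pow_succ, pow_mul]⟩

/-- If `x ≡ z⁻¹` modulo a normal subgroup `U`, then `⟨x, z⟩` is cyclic modulo `U`. -/
theorem commutator_closure_pair_le {G : Type*} [Group G] (U : Subgroup G) [U.Normal] {x z : G}
    (h : x * z ∈ U) : ⁅Subgroup.closure {x, z}, Subgroup.closure {x, z}⁆ ≤ U := by
  set f := QuotientGroup.mk' U with hf
  have hle : Subgroup.closure {x, z} ≤ (Subgroup.zpowers (f x)).comap f := by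
    rw [Subgroup.closure_le]
    rintro _ (rfl | rfl)
    · exact Subgroup.mem_zpowers _
    · have h1 : f (x * _) = 1 := (QuotientGroup.eq_one_iff _).mpr h
      rw [map_mul] at h1
      rw [SetLike.mem_coe, Subgroup.mem_comap, eq_inv_of_mul_eq_one_right h1]
      exact inv_mem (Subgroup.mem_zpowers _)
  rw [Subgroup.commutator_le]
  intro a ha b hb
  rw [← QuotientGroup.ker_mk' U, MonoidHom.mem_ker, map_commutatorElement,
    commutatorElement_eq_one_iff_mul_comm]
  obtain ⟨k, hk⟩ := hle ha
  obtain ⟨l, hl⟩ := hle hb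
  rw [← hf, ← hk, ← hl]
  exact ((Commute.refl (f x)).zpow_zpow k l)

/-- For `x ∈ ℧ⁱ` and `v ∈ ℧ⁱ⁺¹`, regularity applied to `x` and `z = v x⁻¹ v⁻¹` writes
`⁅x ^ p, v⁆ = x ^ p * z ^ p` as a product of `p`-th powers of elements of `℧ⁱ⁺¹`. -/
theorem commutator_agemoSeries_le {p : ℕ} {G : Type*} [Group G]
    (hreg : IsRegularPGroup p G) (i : ℕ) :
    ⁅agemoSeries p G (i + 1), agemoSeries p G (i + 1)⁆ ≤ agemoSeries p G (i + 2) := by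
  rw [Subgroup.commutator_le]
  intro u hu v hv
  -- Modulo `℧ⁱ⁺²`, the element `v` centralizes the generators of `℧ⁱ⁺¹`.
  set f := QuotientGroup.mk' (agemoSeries p G (i + 2)) with hf
  have hle : agemoSeries p G (i + 1) ≤ (Subgroup.centralizer {f v}).comap f := by
    conv_lhs => rw [agemoSeries]
    rw [Subgroup.closure_le]
    rintro _ ⟨x, hx, rfl⟩
    rw [SetLike.mem_coe, Subgroup.mem_comap, Subgroup.mem_centralizer_singleton_iff,
      ← commutatorElement_eq_one_iff_mul_comm, ← map_commutatorElement, ← MonoidHom.mem_ker, hf,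
      QuotientGroup.ker_mk']
    have hU : x * (v * x⁻¹ * v⁻¹) ∈ agemoSeries p G (i + 1) := by
      have h := mul_mem ((agemoSeries_normal p G (i + 1)).conj_mem v hv x) (inv_mem hv)
      convert h using 1; group
    obtain ⟨c, hc, hpow⟩ := hreg x (v * x⁻¹ * v⁻¹)
    have hcU := commutator_closure_pair_le _ hU hc
    have heq : ⁅x ^ p, v⁆ = (x * (v * x⁻¹ * v⁻¹)) ^ p * (c ^ p)⁻¹ := by
      rw [hpow, conj_pow, inv_pow, commutatorElement_def]; group
    rw [heq]
    exact mul_mem (pow_mem_agemoSeries hU) (inv_mem (pow_mem_agemoSeries hcU))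
  have h := hle hu
  rwa [Subgroup.mem_comap, Subgroup.mem_centralizer_singleton_iff,
      ← commutatorElement_eq_one_iff_mul_comm, ← map_commutatorElement, ← MonoidHom.mem_ker, hf,
      QuotientGroup.ker_mk'] at h

/-! ### Power maps on central extensions -/

theorem pow_mul_of_central_commutator {G : Type*} [Group G] {x y w : G}
    (hw : y * x = x * y * w) (hwy : Commute w y) (n : ℕ) : y ^ n * x = x * y ^ n * w ^ n := by
  induction n with
  | zero => simp
  | succ n ih =>
    calc y ^ (n + 1) * x = y ^ n * (y * x) := by rw [pow_succ, mul_assoc]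
      _ = (y ^ n * x) * (w * y) := by rw [hw, hwy.eq]; simp only [mul_assoc]
      _ = x * y ^ n * (w ^ (n + 1) * y) := by rw [ih, pow_succ w]; simp only [mul_assoc]
      _ = _ := by rw [(hwy.pow_left (n + 1)).eq, pow_succ y]; simp only [mul_assoc]

/-- The class-two power formula. -/
theorem mul_pow_of_central_commutator {G : Type*} [Group G] {x y w : G} (hw : y * x = x * y * w)
    (hwx : Commute w x) (hwy : Commute w y) (n : ℕ) :
    (x * y) ^ n = x ^ n * y ^ n * w ^ n.choose 2 := by
  induction n with
  | zero => simp
  | succ n ih =>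
    have h1 : Commute (w ^ n.choose 2) (x * y) := (hwx.mul_right hwy).pow_left _
    calc (x * y) ^ (n + 1) = x ^ n * y ^ n * (w ^ n.choose 2 * (x * y)) := by
          rw [pow_succ, ih, mul_assoc]
      _ = x ^ n * (y ^ n * x) * y * w ^ n.choose 2 := by rw [h1.eq]; simp only [mul_assoc]
      _ = x ^ n * x * y ^ n * (w ^ n * y) * w ^ n.choose 2 := by
          rw [pow_mul_of_central_commutator hw hwy]; simp only [mul_assoc]
      _ = x ^ n * x * (y ^ n * y) * (w ^ n * w ^ n.choose 2) := by
          rw [(hwy.pow_left n).eq]; simp only [mul_assoc]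
      _ = _ := by
          rw [← pow_succ, ← pow_succ, ← pow_add, Nat.choose_succ_succ' n 1, Nat.choose_one_right]

/-- If `w` is central in `⟨x, y⟩` and `y ^ p` commutes with `x`, then `w ^ p = 1`; since `p` is odd it divides
`p.choose 2`, so the correction term vanishes. -/
theorem mul_pow_odd_of_central_commutator {G : Type*} [Group G] {p : ℕ} (hodd : Odd p)
    {x y w : G} (hw : y * x = x * y * w) (hwx : Commute w x) (hwy : Commute w y)
    (hyx : Commute (y ^ p) x) : (x * y) ^ p = x ^ p * y ^ p := by
  have hwp : w ^ p = 1 := by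
    have h := pow_mul_of_central_commutator hw hwy p
    rw [hyx.eq] at h
    exact left_eq_mul.mp h
  obtain ⟨k, hk⟩ := hodd
  have hch : p.choose 2 = p * k := by
    rw [Nat.choose_two_right, hk, Nat.add_sub_cancel]
    apply Nat.div_eq_of_eq_mul_left two_pos
    ring
  rw [mul_pow_of_central_commutator hw hwx hwy, hch, pow_mul, hwp, one_pow, mul_one]

/-- Let `Q 0, Q 1, …, Q m` be normal subgroups of `E`, with `Q 0` central, such that `p`-th
powers and commutators of elements of `Q (k + 1)` lie in `Q k`. Then `x ↦ x ^ p ^ k` is a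
homomorphism from `Q k` to the central subgroup `Q 0`.

For the inductive step, the homomorphism `f = (· ^ p ^ k)` on `Q k` is invariant under conjugation,
hence kills `⁅Q k, E⁆`. Modulo `ker f` the group `Q (k + 1)` has class at most two with `p`-th
powers central, so `(x * y) ^ p ≡ x ^ p * y ^ p`; then apply `f`. -/
theorem pow_mul_of_central_chain {E : Type*} [Group E] {p : ℕ} (hodd : Odd p)
    (Q : ℕ → Subgroup E) (hQ : ∀ k, (Q k).Normal) (h0 : Q 0 ≤ Subgroup.center E) (m : ℕ)
    (hpow : ∀ k < m, ∀ x ∈ Q (k + 1), x ^ p ∈ Q k)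
    (hcomm : ∀ k < m, ⁅Q (k + 1), Q (k + 1)⁆ ≤ Q k) (k : ℕ) (hk : k ≤ m) :
    (∀ x ∈ Q k, x ^ p ^ k ∈ Q 0) ∧
      ∀ x ∈ Q k, ∀ y ∈ Q k, (x * y) ^ p ^ k = x ^ p ^ k * y ^ p ^ k := by
  induction k with
  | zero => simp
  | succ k ih =>
    obtain ⟨ih1, ih2⟩ := ih (by omega)
    refine ⟨fun x hx => ?_, fun x hx y hy => ?_⟩
    · rw [pow_succ', pow_mul]
      exact ih1 _ (hpow k (by omega) x hx)
    -- `L` is the kernel of `z ↦ z ^ p ^ k` on `Q k`.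
    let L : Subgroup E :=
      { carrier := {z | z ∈ Q k ∧ z ^ p ^ k = 1}
        one_mem' := ⟨one_mem _, one_pow _⟩
        mul_mem' := fun {a b} ha hb =>
          ⟨mul_mem ha.1 hb.1, by rw [ih2 a ha.1 b hb.1, ha.2, hb.2, one_mul]⟩
        inv_mem' := fun {a} ha => ⟨inv_mem ha.1, by rw [inv_pow, ha.2, inv_one]⟩ }
    have hL : L.Normal :=
      ⟨fun z hz g => ⟨(hQ k).conj_mem z hz.1 g, by rw [conj_pow, hz.2]; simp⟩⟩
    have hcent : ∀ z ∈ Q k, ∀ g : E, Commute (z : E ⧸ L) (g : E ⧸ L) := by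
      intro z hz g
      have hmem : ⁅g, z⁆ ∈ L := by
        have hconj := (hQ k).conj_mem z hz g
        refine ⟨mul_mem hconj (inv_mem hz), ?_⟩
        rw [commutatorElement_def, ih2 _ hconj _ (inv_mem hz), conj_pow,
          Subgroup.mem_center_iff.mp (h0 (ih1 z hz)) g, inv_pow, mul_assoc, mul_assoc]
        simp
      have h := (QuotientGroup.eq_one_iff _).mpr hmem
      exact (commutatorElement_eq_one_iff_mul_comm.mp
        ((map_commutatorElement (QuotientGroup.mk' L) g z).symm.trans h)).symm
    have hw : ⁅y⁻¹, x⁻¹⁆ ∈ Q k :=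
      hcomm k (by omega) (Subgroup.commutator_mem_commutator (inv_mem hy) (inv_mem hx))
    have hmod : ((x : E ⧸ L) * y) ^ p = (x : E ⧸ L) ^ p * (y : E ⧸ L) ^ p := by
      refine mul_pow_odd_of_central_commutator hodd (w := ((⁅y⁻¹, x⁻¹⁆ : E) : E ⧸ L)) ?_
        (hcent _ hw x) (hcent _ hw y) (hcent _ (hpow k (by omega) y hy) x)
      rw [← QuotientGroup.mk_mul, ← QuotientGroup.mk_mul, ← QuotientGroup.mk_mul]
      congr 1
      rw [commutatorElement_def]
      group
    have hxp := hpow k (by omega) x hx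
    have hyp := hpow k (by omega) y hy
    have hq := QuotientGroup.eq.mp hmod.symm
    have hsplit : (x * y) ^ p = x ^ p * y ^ p * ((x ^ p * y ^ p)⁻¹ * (x * y) ^ p) := by group
    rw [pow_succ', pow_mul, pow_mul, pow_mul, hsplit, ih2 _ (mul_mem hxp hyp) _ hq.1, hq.2,
      mul_one, ih2 _ hxp _ hyp]

/-! ### Cocycles, extensions and inflation -/

/-- The central extension of `G` by `ℂˣ` defined by a cocycle `α`: pairs `(g, a)` with
`(g, a) * (h, b) = (g * h, a * b * α g h)`. -/
@[ext]
structure CocycleExt_s12 {G : Type*} [Group G] (α : G → G → ℂˣ) where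
  /-- The component in `G`. -/
  fst : G
  /-- The component in `ℂˣ`. -/
  snd : ℂˣ

/-- A cocycle makes `G × ℂˣ` a group; `α` need not be normalized, so the identity is
`(1, (α 1 1)⁻¹)`. -/
@[reducible]
def CocycleExt_s12.group {G : Type*} [Group G] {α : G → G → ℂˣ} (hα : IsCocycle α) :
    Group (CocycleExt_s12 α) where
  mul u v := ⟨u.fst * v.fst, u.snd * v.snd * α u.fst v.fst⟩
  one := ⟨1, (α 1 1)⁻¹⟩
  inv u := ⟨u.fst⁻¹, (u.snd * α u.fst⁻¹ u.fst * α 1 1)⁻¹⟩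
  mul_assoc u v w := by
    refine CocycleExt_s12.ext (mul_assoc _ _ _) ?_
    change u.snd * v.snd * α u.fst v.fst * w.snd * α (u.fst * v.fst) w.fst =
      u.snd * (v.snd * w.snd * α v.fst w.fst) * α u.fst (v.fst * w.fst)
    have h := hα u.fst v.fst w.fst
    calc _ = u.snd * v.snd * w.snd * (α u.fst v.fst * α (u.fst * v.fst) w.fst) := by
          simp only [mul_comm, mul_left_comm]
      _ = _ := by rw [h]; simp only [mul_comm, mul_left_comm]
  one_mul u := by
    refine CocycleExt_s12.ext (one_mul _) ?_
    change (α 1 1)⁻¹ * u.snd * α 1 u.fst = u.snd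
    have h := hα 1 1 u.fst
    simp only [one_mul] at h
    rw [mul_right_cancel h, mul_right_comm, inv_mul_cancel, one_mul]
  mul_one u := by
    refine CocycleExt_s12.ext (mul_one _) ?_
    change u.snd * (α 1 1)⁻¹ * α u.fst 1 = u.snd
    have h := hα u.fst 1 1
    simp only [mul_one] at h
    rw [mul_left_cancel h, mul_assoc, inv_mul_cancel, mul_one]
  inv_mul_cancel u := by
    refine CocycleExt_s12.ext (inv_mul_cancel _) ?_
    change (u.snd * α u.fst⁻¹ u.fst * α 1 1)⁻¹ * u.snd * α u.fst⁻¹ u.fst = (α 1 1)⁻¹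
    rw [mul_assoc, mul_inv_rev, mul_assoc, inv_mul_cancel, mul_one]

/-- Every cocycle arises from a central extension of `G` by `ℂˣ` with a set-theoretic section. -/
theorem exists_centralExtension {G : Type u} [Group G] {α : G → G → ℂˣ} (hα : IsCocycle α) :
    ∃ (E : Type u) (_ : Group E) (π : E →* G) (ι : ℂˣ →* E) (σ : G → E),
      Function.Injective ι ∧ π.ker = ι.range ∧ ι.range ≤ Subgroup.center E ∧
      (∀ g, π (σ g) = g) ∧ ∀ g h, σ g * σ h = ι (α g h) * σ (g * h) := by
  let _ := CocycleExt_s12.group hα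
  have h1 : ∀ g, α 1 g = α 1 1 := fun g => by
    have h := hα 1 1 g
    simp only [one_mul] at h
    exact (mul_right_cancel h).symm
  have h2 : ∀ g, α g 1 = α 1 1 := fun g => by
    have h := hα g 1 1
    simp only [mul_one] at h
    exact mul_left_cancel h
  have hmul : ∀ u v : CocycleExt_s12 α,
    u * v = ⟨u.fst * v.fst, u.snd * v.snd * α u.fst v.fst⟩ := fun _ _ => rfl
  let π : CocycleExt_s12 α →* G :=
    { toFun := fun u => u.fst, map_one' := rfl, map_mul' := fun _ _ => rfl }
  let ι : ℂˣ →* CocycleExt_s12 α :=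
    { toFun := fun a => ⟨1, a * (α 1 1)⁻¹⟩
      map_one' := CocycleExt_s12.ext rfl (one_mul _)
      map_mul' := fun a b => by
        rw [hmul]
        refine CocycleExt_s12.ext (one_mul 1).symm ?_
        simp only [mul_assoc, inv_mul_cancel, mul_one, mul_left_comm] }
  have hι : ∀ a, ι a = ⟨1, a * (α 1 1)⁻¹⟩ := fun _ => rfl
  refine ⟨CocycleExt_s12 α, inferInstance, π, ι, fun g => ⟨g, 1⟩, ?_, ?_, ?_, fun _ => rfl, ?_⟩
  · intro a b hab
    exact mul_right_cancel (congrArg CocycleExt_s12.snd hab)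
  · ext u
    rw [MonoidHom.mem_ker, MonoidHom.mem_range]
    constructor
    · intro hu
      exact ⟨u.snd * α 1 1, CocycleExt_s12.ext hu.symm (by simp [hι])⟩
    · rintro ⟨a, rfl⟩
      rfl
  · rintro _ ⟨a, rfl⟩
    rw [Subgroup.mem_center_iff]
    intro u
    rw [hmul, hmul, hι]
    refine CocycleExt_s12.ext (by simp) ?_
    simp only [h1, h2, mul_comm, mul_left_comm]
  · intro g h
    rw [hmul, hmul, hι]
    refine CocycleExt_s12.ext (by simp) ?_
    simp [h1]

/-- If `N` is normal in `G` and `f` is a conjugation-invariant homomorphism to `ℂˣ`, defined on the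
preimage of `N` in the central extension of `G` given by `α` and equal to `a ↦ a ^ q` on `ℂˣ`, then
`α ^ q` is cohomologous to a cocycle inflated from `G ⧸ N`. Here `f` is a function on all of `E`
of which only the values on the preimage of `N` matter. -/
theorem exists_inflation_of_invariant_hom {G E : Type*} [Group G] [Group E] {α : G → G → ℂˣ}
    (N : Subgroup G) [N.Normal] {π : E →* G} {ι : ℂˣ →* E} {σ : G → E} (q : ℕ)
    (hπι : ∀ a, π (ι a) = 1) (hσ : ∀ g, π (σ g) = g)
    (hα : ∀ g h, σ g * σ h = ι (α g h) * σ (g * h))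
    (f : E → ℂˣ) (hfι : ∀ a, f (ι a) = a ^ q)
    (hfmul : ∀ u v, π u ∈ N → π v ∈ N → f (u * v) = f u * f v)
    (hfconj : ∀ u g, π u ∈ N → f (g * u * g⁻¹) = f u) :
    ∃ β : G ⧸ N → G ⧸ N → ℂˣ, IsCocycle β ∧ ∃ ν : G → ℂˣ, ∀ g h,
      α g h ^ q = ν g * ν h * (ν (g * h))⁻¹ * β g h := by
  -- `t` is a section of `E → G ⧸ N`.
  let t : G ⧸ N → E := fun x => σ x.out
  have ht : ∀ x, ((π (t x) : G) : G ⧸ N) = x := fun x => by simp [t, hσ]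
  have hN : ∀ u : E, ((π u : G) : G ⧸ N) = 1 → π u ∈ N := fun u h =>
    (QuotientGroup.eq_one_iff _).mp h
  let b : G ⧸ N → G ⧸ N → E := fun x y => t x * t y * (t (x * y))⁻¹
  have hb : ∀ x y, π (b x y) ∈ N := fun x y => hN _ (by simp [b, ht])
  have hconj : ∀ u g, π u ∈ N → π (g * u * g⁻¹) ∈ N := fun u g hu => by
    simpa using ‹N.Normal›.conj_mem _ hu (π g)
  refine ⟨fun x y => f (b x y), ?_, ?_⟩
  · intro x y z
    have h : b x y * b (x * y) z = (t x * b y z * (t x)⁻¹) * b x (y * z) := by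
      simp only [b, mul_assoc]; group
    have h' := congrArg f h
    rwa [hfmul _ _ (hb _ _) (hb _ _), hfmul _ _ (hconj _ _ (hb _ _)) (hb _ _),
      hfconj _ _ (hb _ _), mul_comm (f (b y z))] at h'
  · let n : G → E := fun g => σ g * (t g)⁻¹
    have hn : ∀ g, π (n g) ∈ N := fun g => hN _ (by simp [n, ht, hσ])
    refine ⟨fun g => f (n g), fun g h => ?_⟩
    have key : ι (α g h) * n (g * h) = n g * ((t g * n h * (t g)⁻¹) * b g h) := by
      have h1 : n g * ((t g * n h * (t g)⁻¹) * b g h) =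
          σ g * σ h * (t ((g : G ⧸ N) * h))⁻¹ := by
        simp only [n, b]; group
      rw [h1, hα, mul_assoc]
      rfl
    have h' := congrArg f key
    rw [hfmul _ _ (by rw [hπι]; exact one_mem _) (hn _), hfι,
      hfmul _ _ (hn _) (by rw [map_mul]; exact mul_mem (hconj _ _ (hn _)) (hb _ _)),
      hfmul _ _ (hconj _ _ (hn _)) (hb _ _), hfconj _ _ (hn _)] at h'
    rw [eq_mul_inv_of_mul_eq h']
    simp only [mul_assoc, mul_comm, mul_left_comm]

/-- Let `p` be an odd prime and `G` a nontrivial regular finite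
`p`-group with `exp M(G/℧(G)) ∣ p`.  Then `exp M(G)` divides `exp G`. -/
theorem exponent_schurMultiplier_dvd_exponent_of_regular
    (p : ℕ) (hp : p.Prime) (hodd : Odd p)
    (G : Type*) [Group G] [Finite G] [Nontrivial G] (hG : IsPGroup p G)
    (hreg : IsRegularPGroup p G)
    (hM : Monoid.exponent (SchurM (G ⧸ agemo p G)) ∣ p) :
    Monoid.exponent (SchurM G) ∣ Monoid.exponent G := by
  obtain ⟨n, hn⟩ : ∃ n, Monoid.exponent G = p ^ (n + 1) := by
    have := Fact.mk hp
    obtain ⟨k, hk⟩ := IsPGroup.iff_card.mp hG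
    obtain ⟨n, -, hn⟩ := (Nat.dvd_prime_pow hp).mp (hk ▸ Group.exponent_dvd_nat_card (G := G))
    cases n with
    | zero =>
      have := Monoid.exp_eq_one_iff.mp (hn.trans (pow_zero p))
      exact absurd this (not_subsingleton G)
    | succ n => exact ⟨n, hn⟩
  have : Group.IsNilpotent G := by
    have := Fact.mk hp
    exact hG.isNilpotent
  have hbot : agemoSeries p G (n + 1) = ⊥ := by
    rw [eq_bot_iff]
    intro x hx
    obtain ⟨g, rfl⟩ := exists_pow_pow_eq_of_mem_agemoSeries hreg _ x hx
    rw [Subgroup.mem_bot, ← hn, Monoid.pow_exponent_eq_one]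
  rw [hn]
  apply Monoid.exponent_dvd_of_forall_pow_eq_one
  intro c
  obtain ⟨⟨α, hα⟩, rfl⟩ := QuotientGroup.mk_surjective c
  rw [← QuotientGroup.mk_pow, QuotientGroup.eq_one_iff, Subgroup.mem_subgroupOf]
  obtain ⟨E, _, π, ι, σ, hιinj, hker, hcen, hσ, hmul⟩ := exists_centralExtension hα
  have hπι : ∀ a, π (ι a) = 1 := fun a => by
    rw [← MonoidHom.mem_ker, hker]
    exact ⟨a, rfl⟩
  -- `Q k` is the preimage of `℧ⁿ⁺¹⁻ᵏ(G)`, from the central `ℂˣ` up to the preimage of `℧(G)`.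
  let Q : ℕ → Subgroup E := fun k => (agemoSeries p G (n + 1 - k)).comap π
  have hQ0 : Q 0 = ι.range := by
    rw [← hker]
    change (agemoSeries p G (n + 1)).comap π = π.ker
    rw [hbot, MonoidHom.comap_bot]
  obtain ⟨hrange, hhom⟩ := pow_mul_of_central_chain hodd Q (fun k => inferInstance)
    (hQ0 ▸ hcen) n
    (by
      intro k hk x hx
      have h := pow_mem_agemoSeries (p := p) (Subgroup.mem_comap.mp hx)
      rw [show n + 1 - (k + 1) + 1 = n + 1 - k by omega, ← map_pow] at h
      exact h)
    (by
      intro k hk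
      obtain ⟨j, hj1, hj2⟩ : ∃ j, n + 1 - (k + 1) = j + 1 ∧ n + 1 - k = j + 2 :=
        ⟨n - k - 1, by omega, by omega⟩
      rw [Subgroup.commutator_le]
      intro x hx y hy
      simp only [Q, hj1, hj2, Subgroup.mem_comap, map_commutatorElement] at hx hy ⊢
      exact commutator_agemoSeries_le hreg j (Subgroup.commutator_mem_commutator hx hy))
    n le_rfl
  have hQn : ∀ u, u ∈ Q n ↔ π u ∈ agemo p G := fun u => by
    simp only [Q, Nat.add_sub_cancel_left, Subgroup.mem_comap, agemoSeries_one]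
  have hex : ∀ u, ∃ a, u ∈ Q n → ι a = u ^ p ^ n := fun u => by
    by_cases hu : u ∈ Q n
    · obtain ⟨a, ha⟩ := hQ0 ▸ hrange u hu
      exact ⟨a, fun _ => ha⟩
    · exact ⟨1, fun h => absurd h hu⟩
  choose f hf using hex
  obtain ⟨β, hβ, ν, hν⟩ := exists_inflation_of_invariant_hom (agemo p G) (p ^ n) hπι hσ hmul f
    (fun a => hιinj (by
      rw [hf _ ((hQn _).mpr (by rw [hπι]; exact one_mem _)), map_pow]))
    (fun u v hu hv => hιinj (by
      rw [← hQn] at hu hv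
      rw [hf _ (mul_mem hu hv), map_mul, hf _ hu, hf _ hv, hhom u hu v hv]))
    (fun u g hu => hιinj (by
      have hu' := (hQn _).mpr hu
      have hc := Subgroup.mem_center_iff.mp (hcen ⟨f u, rfl⟩) g
      rw [hf _ (Subgroup.Normal.conj_mem inferInstance u hu' g), conj_pow, ← hf u hu', hc,
        mul_inv_cancel_right]))
  have hβp := Monoid.exponent_dvd_iff_forall_pow_eq_one.mp hM
    (QuotientGroup.mk (⟨β, hβ⟩ : Z2 (G ⧸ agemo p G)))
  rw [← QuotientGroup.mk_pow, QuotientGroup.eq_one_iff, Subgroup.mem_subgroupOf] at hβp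
  obtain ⟨ζ, hζ⟩ := hβp
  refine ⟨fun g => ν g ^ p * ζ g, fun g h => ?_⟩
  have hζ' : β g h ^ p = ζ g * ζ h * (ζ ((g : G ⧸ agemo p G) * h))⁻¹ := hζ g h
  change α g h ^ p ^ (n + 1) = _
  rw [pow_succ, pow_mul, hν, mul_pow, hζ', ← QuotientGroup.mk_mul]
  simp only [mul_pow, mul_inv, inv_pow]
  simp only [mul_assoc, mul_left_comm]
end

section
/- Let G be a finite group and let 𝔖(G) denote the set of subgroups of G that can be generated by 2 elements. Then lcm(exp Zu(G), exp G) divides the least common multiple, over all S ∈ 𝔖(G), of lcm(exp Zu(S), exp S). (In terms of unitary covers: exp Γu(G) divides lcm_{S ∈ 𝔖(G)} exp Γu(S).) -/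
lemma restrict_mem_Zu {G : Type*} [Group G] (S : Subgroup G) {α : G → G → ℂˣ} (hα : α ∈ Zu G) :
    (fun a b : S => α a b) ∈ Zu S := by
  refine ⟨fun x y z => hα.1 x y z, fun g => ?_⟩
  have h := hα.2 (g : G)
  rw [Subgroup.orderOf_coe] at h
  simpa using h

open Classical in
/-- For a finite group `G`, the exponent `lcm(exp Zu(G), exp G)` of the
unitary cover of `G` divides the least common multiple, over all 2-generator subgroups
`S` of `G`, of the exponents `lcm(exp Zu(S), exp S)` of their unitary covers. -/
theorem exponent_unitaryCover_dvd_lcm_two_generator_subgroups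
    (G : Type*) [Group G] [Fintype G] :
    Nat.lcm (Monoid.exponent ↥(Zu G)) (Monoid.exponent G) ∣
      (Finset.univ.filter
        (fun S : Subgroup G => ∃ x y : G, S = Subgroup.closure {x, y})).lcm
        (fun S => Nat.lcm (Monoid.exponent ↥(Zu ↥S)) (Monoid.exponent ↥S)) := by
  set L := (Finset.univ.filter
        (fun S : Subgroup G => ∃ x y : G, S = Subgroup.closure {x, y})).lcm
        (fun S => Nat.lcm (Monoid.exponent ↥(Zu ↥S)) (Monoid.exponent ↥S))
  have key : ∀ x y : G,
      Nat.lcm (Monoid.exponent ↥(Zu ↥(Subgroup.closure {x, y})))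
        (Monoid.exponent ↥(Subgroup.closure {x, y})) ∣ L := fun x y =>
    Finset.dvd_lcm (f := fun S : Subgroup G =>
      Nat.lcm (Monoid.exponent ↥(Zu ↥S)) (Monoid.exponent ↥S))
      (Finset.mem_filter.2 ⟨Finset.mem_univ _, x, y, rfl⟩)
  have hx : ∀ x y : G, x ∈ Subgroup.closure {x, y} := fun x y =>
    Subgroup.subset_closure (by simp)
  have hy : ∀ x y : G, y ∈ Subgroup.closure {x, y} := fun x y =>
    Subgroup.subset_closure (by simp)
  clear_value L
  refine Nat.lcm_dvd (Monoid.exponent_dvd_of_forall_pow_eq_one ?_)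
    (Monoid.exponent_dvd_of_forall_pow_eq_one ?_)
  · rintro ⟨α, hα⟩
    ext1
    funext x y
    have h := Monoid.exponent_dvd_iff_forall_pow_eq_one.1
      ((Nat.dvd_lcm_left _ _).trans (key x y)) ⟨_, restrict_mem_Zu _ hα⟩
    exact congrFun (congrFun (congrArg Subtype.val h) ⟨x, hx x y⟩) ⟨y, hy x y⟩
  · intro x
    have h := Monoid.exponent_dvd_iff_forall_pow_eq_one.1
      ((Nat.dvd_lcm_right _ _).trans (key x x)) ⟨x, hx x x⟩
    exact congrArg Subtype.val h
end

section
/- Let G be a finite group and β a unitary 2-cocycle on G. Then β(x,g)^{o(x)} = β(g, g⁻¹xg)^{o(x)} for all x, g ∈ G, where o(x) is the order of x. -/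
theorem prod_range_shift {M : Type*} [CommGroup M] (f : ℕ → M) {n : ℕ} (h : f n = f 0) :
    ∏ j ∈ Finset.range n, f (j + 1) = ∏ j ∈ Finset.range n, f j := by
  have := (Finset.prod_range_succ' f n).symm.trans (Finset.prod_range_succ f n)
  rw [h] at this
  exact mul_right_cancel this

/-- The unitarity product may be taken along any right coset of `⟨x⟩`: this is `u_x ^ o(x) = 1`
applied to `u_g`. -/
theorem prod_coset_eq_one {G : Type*} [Group G] {β : G → G → ℂˣ}
    (hc : IsCocycle β) (hu : IsUnitary β) (x g : G) :
    ∏ j ∈ Finset.range (orderOf x), β x (x ^ j * g) = 1 := by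
  have hprod := Finset.prod_congr (rfl : Finset.range (orderOf x) = _) fun j _ => hc x (x ^ j) g
  simp only [Finset.prod_mul_distrib, ← pow_succ'] at hprod
  have htel := prod_range_shift (fun j => β (x ^ j) g) (n := orderOf x)
    (by simp [pow_orderOf_eq_one])
  rw [hu x, htel, one_mul] at hprod
  exact (mul_eq_right.mp hprod.symm)

/-- If `β` is a unitary 2-cocycle on a finite group `G`, then
`β(x,g)^{o(x)} = β(g, g⁻¹xg)^{o(x)}` for all `x, g ∈ G`. -/
theorem unitary_cocycle_conj_pow_eq
    (G : Type*) [Group G] [Finite G] (β : G → G → ℂˣ)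
    (hc : IsCocycle β) (hu : IsUnitary β) :
    ∀ x g : G, β x g ^ orderOf x = β g (g⁻¹ * x * g) ^ orderOf x := by
  intro x g
  set y := g⁻¹ * x * g with hy
  have hgy : g * y = x * g := by rw [hy]; group
  have hsemi : SemiconjBy g y x := hgy
  have hord : orderOf y = orderOf x := hsemi.orderOf_eq g
  -- `β x g / β g y` computed at level `j`, by the identities for `(x, g, y ^ j)` and `(g, y, y ^ j)`.
  have key : ∀ j, β x g * (β g (y ^ (j + 1)) * β y (y ^ j)) =
      β g y * (β x (x ^ j * g) * β g (y ^ j)) := by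
    intro j
    have h₁ := hc x g (y ^ j)
    have h₂ := hc g y (y ^ j)
    rw [(hsemi.pow_right j).eq] at h₁
    rw [hgy, ← pow_succ'] at h₂
    rw [← h₁, ← h₂]
    simp only [mul_left_comm]
  have hprod := Finset.prod_congr (rfl : Finset.range (orderOf x) = _) fun j _ => key j
  simp only [Finset.prod_mul_distrib, Finset.prod_const, Finset.card_range] at hprod
  have hy1 : ∏ j ∈ Finset.range (orderOf x), β y (y ^ j) = 1 := hord ▸ hu y
  have htel := prod_range_shift (fun j => β g (y ^ j)) (n := orderOf x)
    (by simp [← hord, pow_orderOf_eq_one])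
  rw [hy1, htel, prod_coset_eq_one hc hu, mul_one, one_mul] at hprod
  exact mul_right_cancel hprod
end

section
/- Let G be a finite group, N a normal subgroup of G, and α a 2-cocycle on G with values in ℂˣ such that α(n₁, n₂) = 1 for all n₁, n₂ ∈ N, and α(n, g) = α(g, g⁻¹ng) for all n ∈ N and g ∈ G. Then the cohomology class of α is inflated from G/N: there exist a 2-cocycle β on G/N and a map ζ : G → ℂˣ such that α(x,y) = β(xN, yN) · ζ(x)·ζ(y)·ζ(xy)⁻¹ for all x, y ∈ G. -/
theorem IsCocycle.mul_coboundary {G : Type*} [Group G] {α : G → G → ℂˣ} (hc : IsCocycle α)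
    (c : G → ℂˣ) : IsCocycle fun x y => α x y * (c x * c y * (c (x * y))⁻¹) :=
  (Z2 G).mul_mem hc (y := fun x y => c x * c y * (c (x * y))⁻¹) fun x y z => by
    simp only [mul_assoc x y z]
    apply Units.ext
    push_cast
    field_simp

/-- A cocycle trivial on `G × N` and on `N × G` is constant on pairs of cosets. In the left
argument, the cocycle identity for `(x, m, y)` moves `m` across to `m * y`, and normality
rewrites `m * y` as `y * (y⁻¹ * m * y)`. -/
theorem IsCocycle.apply_mul_mul {G : Type*} [Group G] {N : Subgroup G} [hN : N.Normal]
    {γ : G → G → ℂˣ} (hγ : IsCocycle γ)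
    (hright : ∀ x, ∀ n ∈ N, γ x n = 1) (hleft : ∀ n ∈ N, ∀ x, γ n x = 1)
    (x y : G) {m n : G} (hm : m ∈ N) (hn : n ∈ N) : γ (x * m) (y * n) = γ x y := by
  have key : ∀ x y, ∀ n ∈ N, γ x (y * n) = γ x y := fun x y n hn => by
    have h := hγ x y n
    rw [hright _ n hn, hright _ n hn, mul_one, mul_one] at h
    exact h.symm
  have h := hγ x m y
  rw [hright _ m hm, hleft m hm, one_mul, mul_one] at h
  have hmy : y⁻¹ * m * y ∈ N := by simpa using hN.conj_mem m hm y⁻¹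
  rw [key _ _ n hn, h, ← key x y _ hmy]
  congr 1
  group

/-- Let `N ⊴ G` and let `α` be a 2-cocycle which is trivial on `N × N`
and satisfies `α(n,g) = α(g, g⁻¹ng)` for `n ∈ N`, `g ∈ G`.  Then the class of `α` is
inflated from `G/N`: there are a 2-cocycle `β` on `G/N` and `ζ : G → ℂˣ` with
`α(x,y) = β(xN, yN) · δζ(x,y)`. -/
theorem cocycle_inflated_of_trivial_on_normal
    (G : Type*) [Group G] [Finite G] (N : Subgroup G) [N.Normal]
    (α : G → G → ℂˣ) (hc : IsCocycle α)
    (htriv : ∀ n₁ n₂ : G, n₁ ∈ N → n₂ ∈ N → α n₁ n₂ = 1)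
    (hconj : ∀ n ∈ N, ∀ g : G, α n g = α g (g⁻¹ * n * g)) :
    ∃ (β : G ⧸ N → G ⧸ N → ℂˣ) (ζ : G → ℂˣ), IsCocycle β ∧
      ∀ x y : G, α x y = β (↑x) (↑y) * (ζ x * ζ y * (ζ (x * y))⁻¹) := by
  -- `(x : G ⧸ N).out` plays the role of the representative `t x`.
  let c : G → ℂˣ := fun x => α (x : G ⧸ N).out ((x : G ⧸ N).out⁻¹ * x)
  have hmem : ∀ x : G, (x : G ⧸ N).out⁻¹ * x ∈ N := fun x =>
    QuotientGroup.eq.1 (QuotientGroup.out_eq' (x : G ⧸ N))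
  have hcN : ∀ n ∈ N, c n = 1 := fun n hn => by
    refine htriv _ _ ?_ (hmem n)
    have h := N.mul_mem hn (N.inv_mem (hmem n))
    simpa using h
  have hcmul : ∀ x, ∀ n ∈ N, α x n * c x = c (x * n) := fun x n hn => by
    have hx : ((x * n : G) : G ⧸ N) = x := QuotientGroup.mk_mul_of_mem x hn
    have h := hc (x : G ⧸ N).out ((x : G ⧸ N).out⁻¹ * x) n
    rw [htriv _ n (hmem x) hn, mul_one, mul_inv_cancel_left, mul_assoc] at h
    change _ * α _ _ = α _ _
    rw [hx, mul_comm, h]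
  let γ : G → G → ℂˣ := fun x y => α x y * (c x * c y * (c (x * y))⁻¹)
  have hγ : IsCocycle γ := hc.mul_coboundary c
  have hright : ∀ x, ∀ n ∈ N, γ x n = 1 := fun x n hn => by
    change α x n * (c x * c n * (c (x * n))⁻¹) = 1
    rw [hcN n hn, mul_one, ← mul_assoc, hcmul x n hn, mul_inv_cancel]
  have hleft : ∀ n ∈ N, ∀ x, γ n x = 1 := fun n hn x => by
    have hnx : x⁻¹ * n * x ∈ N := by
      simpa using (inferInstance : N.Normal).conj_mem n hn x⁻¹
    change α n x * (c n * c x * (c (n * x))⁻¹) = 1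
    have hx : n * x = x * (x⁻¹ * n * x) := by group
    rw [hcN n hn, one_mul, hx, ← hcmul x _ hnx, hconj n hn x, ← mul_assoc, mul_inv_cancel]
  have hout : ∀ x y : G, γ (x : G ⧸ N).out (y : G ⧸ N).out = γ x y := fun x y => by
    obtain ⟨m, hm⟩ := QuotientGroup.mk_out_eq_mul N x
    obtain ⟨n, hn⟩ := QuotientGroup.mk_out_eq_mul N y
    rw [hm, hn, hγ.apply_mul_mul hright hleft x y m.2 n.2]
  refine ⟨fun a b => γ a.out b.out, fun x => (c x)⁻¹, ?_, fun x y => ?_⟩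
  · intro a b d
    induction a using QuotientGroup.induction_on with | H x => ?_
    induction b using QuotientGroup.induction_on with | H y => ?_
    induction d using QuotientGroup.induction_on with | H z => ?_
    simp only [← QuotientGroup.mk_mul, hout]
    exact hγ x y z
  · change _ = γ _ _ * _
    rw [hout]
    change α x y = α x y * (c x * c y * (c (x * y))⁻¹) * _
    rw [mul_assoc, left_eq_mul, ← mul_inv, ← mul_inv, mul_inv_cancel]
end

section
/- Let G be a finite group which is an internal semidirect product G = N ⋊ H (N normal, H a subgroup, N ∩ H = 1, NH = G), and let α be a 2-cocycle on G with values in ℂˣ such that: α(n₁, n₂) = 1 for all n₁, n₂ ∈ N; α(n, g) = α(g, g⁻¹ng) for all n ∈ N and g ∈ G; and the restriction of α to H × H is a 2-coboundary of H. Then α is a 2-coboundary of G, i.e. there exists ζ : G → ℂˣ with α(x,y) = ζ(x)·ζ(y)·ζ(xy)⁻¹ for all x, y ∈ G. -/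
/-- Both sides are the coefficient of `u_{nhmk}` in the product `u_n u_h u_m u_k` of the twisted
group algebra, bracketed as `(u_n u_h) (u_m u_k)` and, after moving `u_m` past `u_h`, as
`(u_n u_{hmh⁻¹}) (u_h u_k)`. -/
lemma cocycle_product_formula {G : Type*} [Group G] (N : Subgroup G) [N.Normal]
    (α : G → G → ℂˣ) (hc : IsCocycle α)
    (htriv : ∀ n₁ n₂ : G, n₁ ∈ N → n₂ ∈ N → α n₁ n₂ = 1)
    (hconj : ∀ n ∈ N, ∀ g : G, α n g = α g (g⁻¹ * n * g))
    {n m : G} (hn : n ∈ N) (hm : m ∈ N) (h k : G) :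
    α n h * α (n * h) (m * k) * α m k = α (n * (h * m * h⁻¹)) (h * k) * α h k := by
  have hm' : h * m * h⁻¹ ∈ N := ‹N.Normal›.conj_mem m hm h
  have e1 := hc n h (m * k)
  have e2 := hc h m k
  have e3 := hc (h * m * h⁻¹) h k
  have e4 := hc n (h * m * h⁻¹) (h * k)
  have e5 := hconj _ hm' h
  rw [show h⁻¹ * (h * m * h⁻¹) * h = m by group] at e5
  rw [show h * m * h⁻¹ * h = h * m by group, e5] at e3
  rw [htriv _ _ hn hm', one_mul, show h * m * h⁻¹ * (h * k) = h * (m * k) by group] at e4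
  rw [e1, mul_assoc, ← e2, e3, e4, ← mul_assoc (α n _)]

/-- Let `G = N ⋊ H` be an internal semidirect product and `α` a
2-cocycle which is trivial on `N × N`, satisfies `α(n,g) = α(g, g⁻¹ng)` for `n ∈ N`,
`g ∈ G`, and whose restriction to `H` is a coboundary of `H`.  Then `α` is a coboundary
of `G`. -/
theorem cocycle_is_coboundary_of_semidirect
    (G : Type*) [Group G] [Finite G] (N H : Subgroup G) [N.Normal]
    (hdisj : N ⊓ H = ⊥) (hsup : N ⊔ H = ⊤)
    (α : G → G → ℂˣ) (hc : IsCocycle α)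
    (htriv : ∀ n₁ n₂ : G, n₁ ∈ N → n₂ ∈ N → α n₁ n₂ = 1)
    (hconj : ∀ n ∈ N, ∀ g : G, α n g = α g (g⁻¹ * n * g))
    (hH : ∃ ξ : ↥H → ℂˣ, ∀ h₁ h₂ : ↥H, α ↑h₁ ↑h₂ = ξ h₁ * ξ h₂ * (ξ (h₁ * h₂))⁻¹) :
    ∃ ζ : G → ℂˣ, ∀ x y : G, α x y = ζ x * ζ y * (ζ (x * y))⁻¹ := by
  obtain ⟨ξ, hξ⟩ := hH
  have hdec : ∀ x : G, ∃ p : N × H, (p.1 : G) * p.2 = x := fun x => by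
    obtain ⟨n, hn, h, hh, e⟩ := Subgroup.mem_sup_of_normal_left.mp (hsup ▸ Subgroup.mem_top x)
    exact ⟨(⟨n, hn⟩, ⟨h, hh⟩), e⟩
  choose d hd using hdec
  have hinj : Function.Injective (fun p : N × H => (p.1 : G) * p.2) :=
    Subgroup.mul_injective_of_disjoint (disjoint_iff.mpr hdisj)
  refine ⟨fun x => ξ (d x).2 * (α (d x).1 (d x).2)⁻¹, fun x y => ?_⟩
  obtain ⟨⟨⟨n, hn⟩, h⟩, hx⟩ : ∃ p, d x = p := ⟨_, rfl⟩
  obtain ⟨⟨⟨m, hm⟩, k⟩, hy⟩ : ∃ p, d y = p := ⟨_, rfl⟩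
  have ex := hd x
  have ey := hd y
  rw [hx] at ex
  rw [hy] at ey
  have hxy : d (x * y) = (⟨n * (h * m * (h : G)⁻¹),
      N.mul_mem hn (‹N.Normal›.conj_mem m hm h)⟩, h * k) := by
    apply hinj
    simp only [hd]
    rw [← ex, ← ey]
    simp only [Subgroup.coe_mul]
    group
  have key := cocycle_product_formula N α hc htriv hconj hn hm h k
  simp only at ex ey
  rw [ex, ey, hξ h k] at key
  simp only [hx, hy, hxy, Subgroup.coe_mul]
  have e : α x y = (α n h)⁻¹ * (α n h * α x y * α m k) * (α m k)⁻¹ := by group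
  rw [e, key, mul_inv, inv_inv]
  simp only [mul_comm, mul_left_comm, mul_assoc]
end

section
/- Let Γ be a group, G a finite group generated by d elements, and π : Γ → G a surjective group homomorphism whose kernel is contained in the center of Γ (i.e. Γ is a central extension of G). Then there exists a subgroup X of Γ generated by d elements such that π(X) = G and the commutator subgroup of X equals the commutator subgroup of Γ. -/
/-!
Lift a generating set of `G` through a set-theoretic section of `π`, and let `X` be the subgroup
generated by the lifts; then `X` surjects onto `G`. Hence `Γ = X · ker π` with `ker π` central, and
multiplying the arguments of a commutator by central elements does not change it, so `X` and `Γ`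
have the same commutators. This last step is `commutator_eq_of_map_eq_top`.
-/

open scoped commutatorElement in
lemma commutatorElement_mul_center {Γ : Type*} [Group Γ] (x y : Γ) {z w : Γ}
    (hz : z ∈ Subgroup.center Γ) (hw : w ∈ Subgroup.center Γ) : ⁅x * z, y * w⁆ = ⁅x, y⁆ := by
  rw [Subgroup.mem_center_iff] at hz hw
  have hcomm : x * z * (y * w) = x * y * (z * w) := by
    rw [mul_assoc x z, ← mul_assoc z y, ← hz y]
    simp only [mul_assoc]
  have hcomm' : y * w * (x * z) = y * x * (z * w) := by
    rw [mul_assoc y w, ← mul_assoc w x, ← hw x, mul_assoc x w, ← hw z]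
    simp only [mul_assoc]
  have key (a b : Γ) : ⁅a, b⁆ = (a * b) * (b * a)⁻¹ := by
    rw [commutatorElement_def, mul_inv_rev, mul_assoc (a * b)]
  rw [key, key, hcomm, hcomm']
  group

/-- A subgroup supplementing a central kernel has the full commutator subgroup. -/
lemma commutator_eq_of_map_eq_top {Γ G : Type*} [Group Γ] [Group G] (π : Γ →* G)
    (hcentral : π.ker ≤ Subgroup.center Γ) (X : Subgroup Γ) (hX : X.map π = ⊤) :
    ⁅X, X⁆ = ⁅(⊤ : Subgroup Γ), (⊤ : Subgroup Γ)⁆ := by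
  have hdecomp (g : Γ) : ∃ x ∈ X, ∃ z ∈ Subgroup.center Γ, g = x * z := by
    obtain ⟨x, hx, hxg⟩ : π g ∈ X.map π := hX ▸ Subgroup.mem_top _
    refine ⟨x, hx, x⁻¹ * g, hcentral ?_, by group⟩
    rw [MonoidHom.mem_ker, map_mul, map_inv, hxg, inv_mul_cancel]
  refine le_antisymm (Subgroup.commutator_mono le_top le_top) ?_
  rw [Subgroup.commutator_le]
  intro g _ h _
  obtain ⟨x, hx, z, hz, rfl⟩ := hdecomp g
  obtain ⟨y, hy, w, hw, rfl⟩ := hdecomp h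
  rw [commutatorElement_mul_center x y hz hw]
  exact Subgroup.commutator_mem_commutator hx hy

/-- Let `π : Γ → G` be a central extension of a finite group `G`
generated by `d` elements.  Then there is a `d`-generator subgroup `X ≤ Γ` with
`π(X) = G` and `[X, X] = [Γ, Γ]`. -/
theorem exists_subgroup_of_central_extension
    (Γ : Type*) [Group Γ] (G : Type*) [Group G] [Finite G]
    (π : Γ →* G) (hsurj : Function.Surjective π) (hcentral : π.ker ≤ Subgroup.center Γ)
    (d : ℕ) (S : Finset G) (hcard : S.card = d) (hgen : Subgroup.closure (S : Set G) = ⊤) :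
    ∃ X : Subgroup Γ,
      (∃ T : Finset Γ, T.card = d ∧ Subgroup.closure (T : Set Γ) = X) ∧
      X.map π = ⊤ ∧ ⁅X, X⁆ = ⁅(⊤ : Subgroup Γ), (⊤ : Subgroup Γ)⁆ := by
  classical
  have hσ : Function.RightInverse (Function.surjInv hsurj) π := Function.rightInverse_surjInv hsurj
  set σ := Function.surjInv hsurj
  have hmap : (Subgroup.closure ((S.image σ : Finset Γ) : Set Γ)).map π = ⊤ := by
    rw [MonoidHom.map_closure, Finset.coe_image, ← Set.image_comp, hσ.comp_eq_id, Set.image_id,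
      hgen]
  refine ⟨_, ⟨S.image σ, ?_, rfl⟩, hmap, ?_⟩
  · rw [Finset.card_image_of_injective _ hσ.injective, hcard]
  · exact commutator_eq_of_map_eq_top π hcentral _ hmap
end
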